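/- Let m ≥ 4, let Ω ⊆ ℝ^m be open with torsion-free C^∞ Christoffel symbols Γ^λ_{μν} : Ω → ℝ, let φ : W → Ω be a geodesic flow, let γ : I → Ω be a C^∞ curve on an open interval I, and let f(t,s) = φ(γ(t), γ'(t), s) be the ∇-tangent surface, defined on a neighborhood of (t₀,0) in I × ℝ. If (∇γ)(t₀), (∇²γ)(t₀), (∇³γ)(t₀) are linearly independent, then the germ of f at (t₀,0) is diffeomorphic to the embedded cuspidal edge (u,w) ↦ (u, w², w³, 0, …, 0) : ℝ² → ℝ^m. -/

import Mathlib

open Set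

noncomputable section

/-- `σ` is a `C^∞` diffeomorphism from the open set `U` onto its open image. -/
def SmoothDiffeoOn {E F : Type*} [NormedAddCommGroup E] [NormedSpace ℝ E]
    [NormedAddCommGroup F] [NormedSpace ℝ F] (σ : E → F) (U : Set E) : Prop :=
  IsOpen U ∧ IsOpen (σ '' U) ∧ ContDiffOn ℝ (⊤ : ℕ∞) σ U ∧
    ∃ σinv : F → E, ContDiffOn ℝ (⊤ : ℕ∞) σinv (σ '' U) ∧ ∀ x ∈ U, σinv (σ x) = x

/-- The map-germ of `f` at `p` is diffeomorphic to the map-germ of `g` at `q`: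
there are open neighborhoods `U ∋ p`, `V ∋ f p` and `C^∞` diffeomorphisms
`σ` from `U` onto an open neighborhood of `q`, `τ` from `V` onto an open
neighborhood of `g q`, with `σ p = q`, `τ (f p) = g q`, `f(U) ⊆ V` and
`τ ∘ f = g ∘ σ` on `U`. -/
def GermDiffeomorphic {E F : Type*} [NormedAddCommGroup E] [NormedSpace ℝ E]
    [NormedAddCommGroup F] [NormedSpace ℝ F]
    (f : E → F) (p : E) (g : E → F) (q : E) : Prop :=
  ∃ (U : Set E) (V : Set F) (σ : E → E) (τ : F → F),
    SmoothDiffeoOn σ U ∧ SmoothDiffeoOn τ V ∧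
    p ∈ U ∧ f p ∈ V ∧ σ p = q ∧ τ (f p) = g q ∧
    (∀ x ∈ U, f x ∈ V) ∧ ∀ x ∈ U, τ (f x) = g (σ x)

/-- Iterated covariant derivative of a curve `γ` with respect to the Christoffel
symbols `Γ` (in local coordinates): `covDeriv Γ γ k` is `∇^{k+1} γ`, i.e.
`covDeriv Γ γ 0 = ∇γ = γ'` and
`(∇^{k+1}γ)^λ(t) = d/dt (∇^k γ)^λ(t) + Σ_{μ,ν} Γ^λ_{μν}(γ(t)) (γ^μ)'(t) (∇^k γ)^ν(t)`. -/
noncomputable def covDeriv {m : ℕ} (Γ : (Fin m → ℝ) → Fin m → Fin m → Fin m → ℝ)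
    (γ : ℝ → Fin m → ℝ) : ℕ → ℝ → Fin m → ℝ
  | 0 => deriv γ
  | k + 1 => fun t l =>
      deriv (fun u => covDeriv Γ γ k u l) t +
        ∑ μ, ∑ ν, Γ (γ t) l μ ν * deriv γ t μ * covDeriv Γ γ k t ν

/-- `φ : W → Ω` is a geodesic flow for the Christoffel symbols `Γ` on the open set
`Ω ⊆ ℝ^m`: `W ⊆ Ω × ℝ^m × ℝ` is an open neighborhood of `Ω × ℝ^m × {0}`, `φ` is `C^∞`
on `W`, and for each `(x, v)` the curve `s ↦ φ(x, v, s)` is a geodesic with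
`φ(x,v,0) = x` and `∂φ/∂s(x,v,0) = v`. -/
structure IsGeodesicFlow {m : ℕ} (Γ : (Fin m → ℝ) → Fin m → Fin m → Fin m → ℝ)
    (Ω : Set (Fin m → ℝ)) (W : Set ((Fin m → ℝ) × (Fin m → ℝ) × ℝ))
    (φ : (Fin m → ℝ) × (Fin m → ℝ) × ℝ → Fin m → ℝ) : Prop where
  isOpen_W : IsOpen W
  subset_fst : ∀ p ∈ W, p.1 ∈ Ω
  mem_zero : ∀ x ∈ Ω, ∀ v, (x, v, (0 : ℝ)) ∈ W
  smooth : ContDiffOn ℝ (⊤ : ℕ∞) φ W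
  mapsTo : ∀ p ∈ W, φ p ∈ Ω
  init_pos : ∀ x ∈ Ω, ∀ v, φ (x, v, 0) = x
  init_vel : ∀ x ∈ Ω, ∀ v, deriv (fun s => φ (x, v, s)) 0 = v
  geodesic : ∀ p ∈ W, ∀ l,
    deriv (deriv (fun s => φ (p.1, p.2.1, s) l)) p.2.2 +
      ∑ μ, ∑ ν, Γ (φ p) l μ ν * deriv (fun s => φ (p.1, p.2.1, s) μ) p.2.2 *
        deriv (fun s => φ (p.1, p.2.1, s) ν) p.2.2 = 0

/-!
Let `f(t, s)` be the `∇`-tangent surface. Along the axis `s = 0` the field `∂ₛ - ∂ₜ` spans the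
kernel of `df`, because `∂ₛf = γ' = ∂ₜf` there. Differentiating the geodesic equation along
`D = ∂ₛ - ∂ₜ`, with torsion-freeness merging the two first order terms, gives
`D²f = -∇²γ` and `D³f = 2∇³γ` at `(t₀, 0)`. After a shear that turns `D` into `∂_w`, the surface is
a map `g(u, w)` with `∂_w g(u, 0) = 0` for which `∂_u g`, `∂_w²g`, `∂_w³g` are independent at the
origin, and any such germ is a cuspidal edge: by Whitney's theorem on even functions
`g = a(u, w²) + w b(u, w²)`, vanishing of `∂_w g` on the axis lets `w²` be divided out of `b`, so
`g = a(u, w²) + w³ c(u, w²)`; and `a(x, y) + z c(x, y)`, completed by linear coordinates in the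
target, is a local diffeomorphism that carries the standard edge `(u, w², w³, 0, …, 0)` to `g`.

Whitney's theorem is deduced from Borel's lemma: subtracting a Borel realization of its even Taylor
coefficients makes an even function flat along `w = 0`, and then `w = √y` may be substituted.
-/

open Filter Topology
open scoped ContDiff

section DirectionalDerivative

variable {E V : Type*} [NormedAddCommGroup E] [NormedSpace ℝ E]
  [NormedAddCommGroup V] [NormedSpace ℝ V]

/-- The directional derivative `∂_v g`, as an operator on maps so that it can be iterated. -/
def dirDeriv (v : E) (g : E → V) : E → V := fun x => fderiv ℝ g x v

theorem dirDeriv_of_hasFDerivAt {g : E → V} {L : E →L[ℝ] V} {x : E} (hg : HasFDerivAt g L x)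
    (v : E) : dirDeriv v g x = L v :=
  congrArg (· v) hg.fderiv

theorem contDiff_dirDeriv {g : E → V} (hg : ContDiff ℝ ∞ g) (v : E) :
    ContDiff ℝ ∞ (dirDeriv v g) :=
  (hg.fderiv_right (m := ∞) (by simp)).clm_apply contDiff_const

theorem contDiff_iterate_dirDeriv {g : E → V} (hg : ContDiff ℝ ∞ g) (v : E) (n : ℕ) :
    ContDiff ℝ ∞ ((dirDeriv v)^[n] g) := by
  induction n with
  | zero => exact hg
  | succ n ih => rw [Function.iterate_succ_apply']; exact contDiff_dirDeriv ih v

theorem dirDeriv_sub_direction (g : E → V) (v w : E) :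
    dirDeriv (v - w) g = dirDeriv v g - dirDeriv w g := by
  ext x; simp [dirDeriv]

theorem dirDeriv_add {g h : E → V} (hg : Differentiable ℝ g) (hh : Differentiable ℝ h) (v : E) :
    dirDeriv v (g + h) = dirDeriv v g + dirDeriv v h := by
  ext x; simp [dirDeriv, fderiv_add (hg x) (hh x)]

theorem dirDeriv_const_smul {g : E → V} (hg : Differentiable ℝ g) (r : ℝ) (v : E) :
    dirDeriv v (r • g) = r • dirDeriv v g := by
  ext x; simp [dirDeriv, fderiv_const_smul (hg x)]

theorem dirDeriv_sub {g h : E → V} (hg : Differentiable ℝ g) (hh : Differentiable ℝ h) (v : E) :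
    dirDeriv v (g - h) = dirDeriv v g - dirDeriv v h := by
  ext x; simp [dirDeriv, fderiv_sub (hg x) (hh x)]

theorem dirDeriv_eventuallyEq {g h : E → V} {x : E} (hgh : g =ᶠ[𝓝 x] h) (v : E) :
    dirDeriv v g =ᶠ[𝓝 x] dirDeriv v h :=
  (hgh.fderiv (𝕜 := ℝ)).mono fun _ hy => congrArg (· v) hy

theorem iterate_dirDeriv_eventuallyEq {g h : E → V} {x : E} (hgh : g =ᶠ[𝓝 x] h) (v : E) (n : ℕ) :
    (dirDeriv v)^[n] g =ᶠ[𝓝 x] (dirDeriv v)^[n] h := by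
  induction n with
  | zero => exact hgh
  | succ n ih => simpa only [Function.iterate_succ_apply'] using dirDeriv_eventuallyEq ih v

theorem dirDeriv_comm {g : E → V} (hg : ContDiff ℝ ∞ g) (v w : E) :
    dirDeriv v (dirDeriv w g) = dirDeriv w (dirDeriv v g) := by
  have hd : Differentiable ℝ (fderiv ℝ g) :=
    (hg.fderiv_right (m := ∞) (by simp)).differentiable (by simp)
  have second (a b x : E) : dirDeriv a (dirDeriv b g) x = fderiv ℝ (fderiv ℝ g) x a b :=
    (dirDeriv_of_hasFDerivAt ((hd x).hasFDerivAt.clm_apply (hasFDerivAt_const b x)) a).trans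
      (by simp)
  ext x
  rw [second, second]
  exact (hg.contDiffAt (x := x)).isSymmSndFDerivAt
    (by simpa using ENat.LEInfty.out) v w

theorem iterate_dirDeriv_eq_iteratedFDeriv {g : E → V} (hg : ContDiff ℝ ∞ g) (v : E) (n : ℕ)
    (x : E) : (dirDeriv v)^[n] g x = iteratedFDeriv ℝ n g x fun _ => v := by
  induction n generalizing x with
  | zero => simp
  | succ n ih =>
    have hd : DifferentiableAt ℝ (iteratedFDeriv ℝ n g) x :=
      hg.differentiable_iteratedFDeriv (by exact_mod_cast WithTop.coe_lt_top n) x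
    rw [Function.iterate_succ_apply', funext ih, iteratedFDeriv_succ_apply_left]
    exact dirDeriv_of_hasFDerivAt ((ContinuousMultilinearMap.apply ℝ (fun _ : Fin n => E) V
      fun _ => v).hasFDerivAt.comp x hd.hasFDerivAt) v

theorem dirDeriv_comp_affine {F : Type*} [NormedAddCommGroup F] [NormedSpace ℝ F] {g : E → V}
    (hg : Differentiable ℝ g) (c : E) (L : F →L[ℝ] E) (v : F) :
    dirDeriv v (fun x => g (c + L x)) = fun x => dirDeriv (L v) g (c + L x) := by
  ext x
  exact dirDeriv_of_hasFDerivAt ((hg _).hasFDerivAt.comp x (L.hasFDerivAt.const_add c)) v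

theorem iterate_dirDeriv_comp_affine {F : Type*} [NormedAddCommGroup F] [NormedSpace ℝ F]
    {g : E → V} (hg : ContDiff ℝ ∞ g) (c : E) (L : F →L[ℝ] E) (v : F) (n : ℕ) :
    (dirDeriv v)^[n] (fun x => g (c + L x)) = fun x => (dirDeriv (L v))^[n] g (c + L x) := by
  induction n with
  | zero => rfl
  | succ n ih =>
    have hd : Differentiable ℝ ((dirDeriv (L v))^[n] g) :=
      (contDiff_iterate_dirDeriv hg _ n).differentiable (by simp)
    rw [Function.iterate_succ_apply', Function.iterate_succ', ih, dirDeriv_comp_affine hd]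
    rfl

theorem iterate_two_dirDeriv_sub {f : E → V} (hf : ContDiff ℝ ∞ f) (v w : E) :
    (dirDeriv (v - w))^[2] f =
      dirDeriv (v - w) (dirDeriv v f) - dirDeriv w (dirDeriv (v - w) f) := by
  have hd (u : E) : Differentiable ℝ (dirDeriv u f) :=
    (contDiff_dirDeriv hf u).differentiable (by simp)
  calc (dirDeriv (v - w))^[2] f = dirDeriv (v - w) (dirDeriv v f - dirDeriv w f) := by
        rw [← dirDeriv_sub_direction]; rfl
    _ = _ := by rw [dirDeriv_sub (hd v) (hd w), dirDeriv_comm hf (v - w) w]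

theorem iterate_three_dirDeriv_sub {f : E → V} (hf : ContDiff ℝ ∞ f) (v w : E) :
    (dirDeriv (v - w))^[3] f = dirDeriv (v - w) ((dirDeriv v)^[2] f) -
      (2 : ℝ) • dirDeriv w (dirDeriv (v - w) (dirDeriv v f)) +
      (dirDeriv w)^[2] (dirDeriv (v - w) f) := by
  have hv := contDiff_dirDeriv hf v
  have hD := contDiff_dirDeriv hf (v - w)
  have hd {g : E → V} (hg : ContDiff ℝ ∞ g) (u : E) : Differentiable ℝ (dirDeriv u g) :=
    (contDiff_dirDeriv hg u).differentiable (by simp)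
  have hDD : dirDeriv (v - w) (dirDeriv (v - w) (dirDeriv v f)) =
      dirDeriv (v - w) ((dirDeriv v)^[2] f) - dirDeriv w (dirDeriv (v - w) (dirDeriv v f)) :=
    iterate_two_dirDeriv_sub hv v w
  rw [Function.iterate_succ_apply', iterate_two_dirDeriv_sub hf,
    dirDeriv_sub (hd hv (v - w)) (hd hD w), hDD, dirDeriv_comm hD (v - w) w]
  change _ - dirDeriv w ((dirDeriv (v - w))^[2] f) = _
  rw [iterate_two_dirDeriv_sub hf, dirDeriv_sub (hd hv (v - w)) (hd hD w)]
  simp only [Function.iterate_succ_apply', Function.iterate_zero, id_eq]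
  module

theorem hasDerivAt_fst_dirDeriv {g : ℝ × E → V} (hg : Differentiable ℝ g) (t : ℝ)
    (y : E) : HasDerivAt (fun t => g (t, y)) (dirDeriv (1, 0) g (t, y)) t :=
  (hg (t, y)).hasFDerivAt.comp_hasDerivAt t ((hasDerivAt_id t).prodMk (hasDerivAt_const t y))

theorem dirDeriv_fst_eventuallyEq_deriv {g : ℝ × E → V} (hg : Differentiable ℝ g) {t₀ : ℝ}
    {y : E} {h : ℝ → V} (hgh : (fun t => g (t, y)) =ᶠ[𝓝 t₀] h) :
    (fun t => dirDeriv (1, 0) g (t, y)) =ᶠ[𝓝 t₀] deriv h := by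
  filter_upwards [hgh.deriv] with t ht
  rw [← ht, (hasDerivAt_fst_dirDeriv hg t y).deriv]

theorem contDiff_of_dirDeriv_mem [FiniteDimensional ℝ E] {S : Set (E → V)}
    (hdiff : ∀ g ∈ S, Differentiable ℝ g) (hS : ∀ g ∈ S, ∀ v, dirDeriv v g ∈ S) {g : E → V}
    (hg : g ∈ S) : ContDiff ℝ ∞ g := by
  refine contDiff_infty.2 fun n => ?_
  induction n generalizing g with
  | zero => exact contDiff_zero.2 (hdiff g hg).continuous
  | succ n ih =>
    rw [Nat.cast_succ, contDiff_succ_iff_fderiv_apply]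
    exact ⟨hdiff g hg, by simp, fun v => ih (hS g hg v)⟩

end DirectionalDerivative

section VerticalDerivative

variable {E V : Type*} [NormedAddCommGroup E] [NormedSpace ℝ E]
  [NormedAddCommGroup V] [NormedSpace ℝ V]

local notation "∂₂" => dirDeriv (0, 1)

theorem hasDerivAt_snd_dirDeriv {g : E × ℝ → V} (hg : Differentiable ℝ g) (x : E) (w : ℝ) :
    HasDerivAt (fun w => g (x, w)) (∂₂ g (x, w)) w :=
  (hg (x, w)).hasFDerivAt.comp_hasDerivAt w ((hasDerivAt_const w x).prodMk (hasDerivAt_id w))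

theorem dirDeriv_snd_comp_fst {h : E → V} (hh : Differentiable ℝ h) :
    ∂₂ (fun p : E × ℝ => h p.1) = 0 := by
  ext p
  exact (dirDeriv_of_hasFDerivAt ((hh p.1).hasFDerivAt.comp p hasFDerivAt_fst) (0, 1)).trans
    (by simp)

theorem dirDeriv_snd_smul {k : E × ℝ → V} (hk : Differentiable ℝ k) :
    ∂₂ (fun p => p.2 • k p) = fun p => k p + p.2 • ∂₂ k p := by
  ext p
  exact (dirDeriv_of_hasFDerivAt (hasFDerivAt_snd.smul (hk p).hasFDerivAt) (0, 1)).trans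
    (by simp [dirDeriv, add_comm])

theorem iterate_succ_dirDeriv_snd_smul {k : E × ℝ → V} (hk : ContDiff ℝ ∞ k) (n : ℕ) :
    ∂₂^[n + 1] (fun p => p.2 • k p) =
      (n + 1 : ℝ) • ∂₂^[n] k + fun p => p.2 • ∂₂^[n + 1] k p := by
  have hd (j : ℕ) : Differentiable ℝ (∂₂^[j] k) :=
    (contDiff_iterate_dirDeriv hk _ j).differentiable (by simp)
  induction n with
  | zero =>
    refine (dirDeriv_snd_smul (hd 0)).trans ?_
    ext p
    simp
  | succ n ih =>
    have hsmul : Differentiable ℝ fun p : E × ℝ => p.2 • ∂₂^[n + 1] k p :=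
      differentiable_snd.smul (hd (n + 1))
    rw [Function.iterate_succ_apply', ih, dirDeriv_add ((hd n).const_smul _) hsmul,
      dirDeriv_const_smul (hd n), dirDeriv_snd_smul (hd (n + 1))]
    ext p
    simp only [Function.iterate_succ_apply', Pi.add_apply, Pi.smul_apply]
    push_cast
    module

theorem iterate_dirDeriv_snd_pow_smul_zero {c : E × ℝ → V} (hc : ContDiff ℝ ∞ c) (n k : ℕ)
    (x : E) : ∂₂^[n] (fun p => p.2 ^ k • c p) (x, 0) =
      (n.descFactorial k : ℝ) • ∂₂^[n - k] c (x, 0) := by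
  induction k generalizing n with
  | zero => simp
  | succ k ih =>
    cases n with
    | zero => simp
    | succ n =>
      have hk : ContDiff ℝ ∞ fun p : E × ℝ => p.2 ^ k • c p := (contDiff_snd.pow k).smul hc
      have := congrFun (iterate_succ_dirDeriv_snd_smul hk n) (x, 0)
      simp only [smul_smul, ← pow_succ'] at this
      rw [this]
      simp only [Pi.add_apply, Pi.smul_apply, ih, smul_smul,
        Nat.succ_descFactorial_succ, Nat.add_sub_add_right]
      push_cast
      module

theorem dirDeriv_snd_comp_sq {a : E × ℝ → V} (ha : Differentiable ℝ a) :
    ∂₂ (fun p => a (p.1, p.2 ^ 2)) = fun p => (2 * p.2) • ∂₂ a (p.1, p.2 ^ 2) := by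
  ext ⟨x, w⟩
  have hcomp : Differentiable ℝ fun p : E × ℝ => a (p.1, p.2 ^ 2) := by fun_prop
  have := (hasDerivAt_snd_dirDeriv ha x (w ^ 2)).scomp w (hasDerivAt_pow 2 w)
  simpa using (hasDerivAt_snd_dirDeriv hcomp x w).unique this

end VerticalDerivative

section Hadamard

variable {E V : Type*} [NormedAddCommGroup E] [NormedSpace ℝ E]
  [NormedAddCommGroup V] [NormedSpace ℝ V]

/-- The quotient `∫₀¹ ∂_w g(x, tw) dt` of Hadamard's lemma: for smooth `g` it is the smooth
extension of `(g(x, w) - g(x, 0)) / w` across `w = 0`. -/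
def hadamardQuotient (g : E × ℝ → V) : E × ℝ → V :=
  fun p => ∫ t in (0 : ℝ)..1, dirDeriv (0, 1) g (p.1, t * p.2)

theorem add_smul_hadamardQuotient [CompleteSpace V] {g : E × ℝ → V}
    (hg : ContDiff ℝ ∞ g) (x : E) (w : ℝ) :
    g (x, 0) + w • hadamardQuotient g (x, w) = g (x, w) := by
  have hderiv (t : ℝ) :
      HasDerivAt (fun t => g (x, t * w)) (w • dirDeriv (0, 1) g (x, t * w)) t := by
    have := hasDerivAt_snd_dirDeriv (hg.differentiable (by simp)) x (t * w)
    simpa [Function.comp_def] using this.scomp t ((hasDerivAt_id t).mul_const w)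
  have hint : Continuous fun t => w • dirDeriv (0, 1) g (x, t * w) := by
    have := (contDiff_dirDeriv hg (0, 1)).continuous
    fun_prop
  have := intervalIntegral.integral_eq_sub_of_hasDerivAt (fun t _ => hderiv t)
    (hint.intervalIntegrable 0 1)
  simp only [intervalIntegral.integral_smul, one_mul, zero_mul] at this
  simp [hadamardQuotient, this]

variable [FiniteDimensional ℝ E]

theorem hasFDerivAt_intervalIntegral_param {h : E × ℝ → V} (hh : ContDiff ℝ 1 h) (a b : ℝ)
    (x : E) :
    HasFDerivAt (fun x => ∫ t in a..b, h (x, t))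
      (∫ t in a..b, (fderiv ℝ h (x, t)).comp (ContinuousLinearMap.inl ℝ E ℝ)) x := by
  have hslice (y : E) : Continuous fun t : ℝ => (y, t) := by fun_prop
  have hcont : Continuous fun p => (fderiv ℝ h p).comp (ContinuousLinearMap.inl ℝ E ℝ) :=
    (hh.continuous_fderiv one_ne_zero).clm_comp continuous_const
  obtain ⟨C, hC⟩ := ((isCompact_closedBall x 1).prod
    (isCompact_uIcc (a := a) (b := b))).exists_bound_of_continuousOn hcont.continuousOn
  refine intervalIntegral.hasFDerivAt_integral_of_dominated_of_fderiv_le (bound := fun _ => C)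
    (Metric.closedBall_mem_nhds x one_pos)
    (.of_forall fun y => (hh.continuous.comp (hslice y)).aestronglyMeasurable)
    ((hh.continuous.comp (hslice x)).intervalIntegrable _ _)
    (hcont.comp (hslice x)).aestronglyMeasurable
    (.of_forall fun t ht y hy => hC (y, t) ⟨hy, uIoc_subset_uIcc ht⟩) (by simp)
    (.of_forall fun t _ y _ => ?_)
  exact (hh.differentiable one_ne_zero _).hasFDerivAt.comp y (hasFDerivAt_prodMk_left y t)

theorem contDiff_intervalIntegral_param {h : E × ℝ → V} (hh : ContDiff ℝ ∞ h) (a b : ℝ) :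
    ContDiff ℝ ∞ fun x => ∫ t in a..b, h (x, t) := by
  refine contDiff_of_dirDeriv_mem
    (S := {g | ∃ h : E × ℝ → V, ContDiff ℝ ∞ h ∧ g = fun x => ∫ t in a..b, h (x, t)})
    ?_ ?_ ⟨h, hh, rfl⟩
  · rintro _ ⟨h, hh, rfl⟩ x
    exact (hasFDerivAt_intervalIntegral_param (hh.of_le (mod_cast le_top)) a b x).differentiableAt
  · rintro _ ⟨h, hh, rfl⟩ v
    refine ⟨dirDeriv (v, 0) h, contDiff_dirDeriv hh _, funext fun x => ?_⟩
    have hint : Continuous fun t : ℝ =>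
        (fderiv ℝ h (x, t)).comp (ContinuousLinearMap.inl ℝ E ℝ) := by
      have := hh.continuous_fderiv (by simp)
      fun_prop
    have := hasFDerivAt_intervalIntegral_param (hh.of_le (mod_cast le_top)) a b x
    rw [dirDeriv_of_hasFDerivAt this,
      ContinuousLinearMap.intervalIntegral_apply (hint.intervalIntegrable _ _)]
    rfl

theorem contDiff_hadamardQuotient {g : E × ℝ → V} (hg : ContDiff ℝ ∞ g) :
    ContDiff ℝ ∞ (hadamardQuotient g) := by
  refine contDiff_intervalIntegral_param
    (h := fun q : (E × ℝ) × ℝ => dirDeriv (0, 1) g (q.1.1, q.2 * q.1.2)) ?_ 0 1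
  have := contDiff_dirDeriv hg (0, 1)
  fun_prop

theorem exists_even_smul_of_odd [CompleteSpace V] {g : E × ℝ → V} (hg : ContDiff ℝ ∞ g)
    (hodd : ∀ x w, g (x, -w) = -g (x, w)) :
    ∃ k : E × ℝ → V, ContDiff ℝ ∞ k ∧ (∀ x w, k (x, -w) = k (x, w)) ∧
      ∀ x w, g (x, w) = w • k (x, w) := by
  have hzero (x : E) : g (x, 0) = 0 := by
    simpa [eq_neg_iff_add_eq_zero, ← two_smul ℝ] using hodd x 0
  have hgk (x : E) (w : ℝ) : g (x, w) = w • hadamardQuotient g (x, w) := by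
    simpa [hzero] using (add_smul_hadamardQuotient hg x w).symm
  refine ⟨hadamardQuotient g, contDiff_hadamardQuotient hg, fun x w => ?_, hgk⟩
  rcases eq_or_ne w 0 with rfl | hw
  · simp
  · have := hodd x w
    rw [hgk, hgk, neg_smul, neg_inj] at this
    exact smul_right_injective V hw this

end Hadamard

section Borel

variable {E V : Type*} [NormedAddCommGroup E] [NormedAddCommGroup V] [NormedSpace ℝ V]

/-- The `k`-th term `yᵏ χ(y) c(x) / k!` of Borel's series, before its dilation in `y`. -/
def borelTerm (χ : ℝ → ℝ) (k : ℕ) (c : E → V) : E × ℝ → V :=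
  fun p => p.2 ^ k • χ p.2 • (k.factorial : ℝ)⁻¹ • c p.1

theorem hasCompactSupport_borelTerm {χ : ℝ → ℝ} (hχ : HasCompactSupport χ) (k : ℕ) {c : E → V}
    (hc : HasCompactSupport c) : HasCompactSupport (borelTerm χ k c) := by
  refine HasCompactSupport.intro (hc.isCompact.prod hχ.isCompact) fun p hp => ?_
  rcases not_and_or.1 hp with h | h <;> simp [borelTerm, image_eq_zero_of_notMem_tsupport h]

variable [NormedSpace ℝ E]

/-- The vertical dilation `(x, y) ↦ (x, r y)`. -/
def verticalDilation (E : Type*) [NormedAddCommGroup E] [NormedSpace ℝ E] (r : ℝ) :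
    E × ℝ →L[ℝ] E × ℝ :=
  (ContinuousLinearMap.id ℝ E).prodMap (r • ContinuousLinearMap.id ℝ ℝ)

theorem verticalDilation_apply (r : ℝ) (p : E × ℝ) : verticalDilation E r p = (p.1, r * p.2) :=
  rfl

theorem norm_verticalDilation_le {r : ℝ} (hr : 1 ≤ r) : ‖verticalDilation E r‖ ≤ r := by
  refine ContinuousLinearMap.opNorm_le_bound _ (by positivity) fun p => ?_
  have hr0 : 0 ≤ r := by positivity
  rw [verticalDilation_apply, Prod.norm_mk, norm_mul, Real.norm_of_nonneg hr0]
  refine max_le ?_ (by gcongr; exact norm_snd_le p)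
  calc ‖p.1‖ ≤ ‖p‖ := norm_fst_le p
    _ ≤ r * ‖p‖ := le_mul_of_one_le_left (norm_nonneg p) hr

theorem norm_iteratedFDeriv_comp_verticalDilation_le {ψ : E × ℝ → V} (hψ : ContDiff ℝ ∞ ψ)
    {r : ℝ} (hr : 1 ≤ r) (k j : ℕ) (p : E × ℝ) :
    ‖iteratedFDeriv ℝ j (fun p => r⁻¹ ^ k • ψ (verticalDilation E r p)) p‖ ≤
      r⁻¹ ^ k * (‖iteratedFDeriv ℝ j ψ (verticalDilation E r p)‖ * r ^ j) := by
  have hcomp : ContDiff ℝ ∞ (ψ ∘ verticalDilation E r) := hψ.comp (verticalDilation E r).contDiff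
  have hj : (j : WithTop ℕ∞) ≤ ∞ := mod_cast le_top
  calc ‖iteratedFDeriv ℝ j (r⁻¹ ^ k • (ψ ∘ verticalDilation E r)) p‖
      = r⁻¹ ^ k * ‖iteratedFDeriv ℝ j (ψ ∘ verticalDilation E r) p‖ := by
        rw [iteratedFDeriv_const_smul_apply (hcomp.of_le hj).contDiffAt, norm_smul,
          Real.norm_of_nonneg (by positivity)]
    _ ≤ r⁻¹ ^ k * (‖iteratedFDeriv ℝ j ψ (verticalDilation E r p)‖ *
          ‖verticalDilation E r‖ ^ j) := by
        rw [(verticalDilation E r).iteratedFDeriv_comp_right hψ p hj]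
        gcongr
        simpa using (iteratedFDeriv ℝ j ψ (verticalDilation E r p)).norm_compContinuousLinearMap_le
          fun _ => verticalDilation E r
    _ ≤ _ := by gcongr; exact norm_verticalDilation_le hr

theorem exists_dilation_iteratedFDeriv_le {ψ : E × ℝ → V} (hψ : ContDiff ℝ ∞ ψ)
    (hsupp : HasCompactSupport ψ) (k : ℕ) :
    ∃ r : ℝ, 1 ≤ r ∧ ∃ C : ℕ → ℝ, (∀ j < k, C j ≤ (1 / 2) ^ k) ∧
      ∀ j p, ‖iteratedFDeriv ℝ j (fun p => r⁻¹ ^ k • ψ (verticalDilation E r p)) p‖ ≤ C j := by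
  have hbound (j : ℕ) : ∃ B, 0 ≤ B ∧ ∀ p, ‖iteratedFDeriv ℝ j ψ p‖ ≤ B := by
    obtain ⟨B, hB⟩ := (hsupp.iteratedFDeriv (𝕜 := ℝ) j).exists_bound_of_continuous
      (hψ.continuous_iteratedFDeriv (mod_cast le_top))
    exact ⟨B, (norm_nonneg _).trans (hB 0), hB⟩
  choose B hB0 hB using hbound
  set r : ℝ := 1 + 2 ^ k * ∑ j ∈ Finset.range k, B j with hr_def
  have hsum : 0 ≤ ∑ j ∈ Finset.range k, B j := Finset.sum_nonneg fun j _ => hB0 j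
  have hr : 1 ≤ r := le_add_of_nonneg_right (by positivity)
  refine ⟨r, hr, fun j => r⁻¹ ^ k * (B j * r ^ j), fun j hj => ?_, fun j p => ?_⟩
  swap
  · refine (norm_iteratedFDeriv_comp_verticalDilation_le hψ hr k j p).trans ?_
    dsimp only
    gcongr
    exact hB _ _
  have hBr : 2 ^ k * B j ≤ r := by
    have := Finset.single_le_sum (fun i _ => hB0 i) (Finset.mem_range.2 hj)
    calc 2 ^ k * B j ≤ 2 ^ k * ∑ j ∈ Finset.range k, B j := by gcongr
      _ ≤ r := by rw [hr_def]; linarith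
  have hpow : 2 ^ k * (B j * r ^ j) ≤ r ^ k :=
    calc 2 ^ k * (B j * r ^ j) = 2 ^ k * B j * r ^ j := by ring
      _ ≤ r * r ^ j := by gcongr
      _ ≤ r ^ k := by rw [← pow_succ']; exact pow_le_pow_right₀ hr hj
  rw [inv_pow, inv_mul_le_iff₀ (by positivity), one_div, inv_pow, ← div_eq_mul_inv,
    le_div_iff₀' (by positivity)]
  exact hpow

theorem iterate_dirDeriv_tsum [CompleteSpace V] {f : ℕ → E → V} {C : ℕ → ℕ → ℝ}
    (hf : ∀ k, ContDiff ℝ ∞ (f k)) (hC : ∀ j, Summable (C j))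
    (hle : ∀ j k x, ‖iteratedFDeriv ℝ j (f k) x‖ ≤ C j k) (v : E) (n : ℕ) (x : E) :
    (dirDeriv v)^[n] (fun x => ∑' k, f k x) x = ∑' k, (dirDeriv v)^[n] (f k) x := by
  have hle' (j k : ℕ) (x : E) (_ : (j : ℕ∞) ≤ ⊤) := hle j k x
  rw [iterate_dirDeriv_eq_iteratedFDeriv (contDiff_tsum (N := ⊤) hf (fun j _ => hC j) hle'),
    iteratedFDeriv_tsum_apply (N := ⊤) hf (fun j _ => hC j) hle' le_top]
  have hsum : Summable fun k => iteratedFDeriv ℝ n (f k) x := .of_norm_bounded (hC n) (hle n · x)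
  simpa [iterate_dirDeriv_eq_iteratedFDeriv (hf _)] using
    (ContinuousMultilinearMap.apply ℝ (fun _ : Fin n => E) V fun _ => v).map_tsum hsum

theorem iterate_dirDeriv_snd_of_eventuallyEq_comp_fst {g : E × ℝ → V} {h : E → V}
    (hh : Differentiable ℝ h) {p : E × ℝ} (hgh : g =ᶠ[𝓝 p] fun q => h q.1) (n : ℕ) :
    (dirDeriv (0, 1))^[n] g p = if n = 0 then h p.1 else 0 := by
  rw [(iterate_dirDeriv_eventuallyEq hgh (0, 1) n).self_of_nhds]
  cases n with
  | zero => simp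
  | succ n =>
    have hzero : dirDeriv ((0, 1) : E × ℝ) (0 : E × ℝ → V) = 0 := by ext; simp [dirDeriv]
    rw [Function.iterate_succ_apply, dirDeriv_snd_comp_fst hh, Function.iterate_fixed hzero]
    simp

theorem iterate_dirDeriv_borelTerm_dilation {χ : ℝ → ℝ} (hχ : ContDiff ℝ ∞ χ)
    (hχ1 : χ =ᶠ[𝓝 0] 1) {c : E → V} (hc : ContDiff ℝ ∞ c) {r : ℝ} (hr : r ≠ 0) (k n : ℕ) (x : E) :
    (dirDeriv (0, 1))^[n] (fun p => r⁻¹ ^ k • borelTerm χ k c (verticalDilation E r p)) (x, 0) =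
      if k = n then c x else 0 := by
  have hterm : (fun p => r⁻¹ ^ k • borelTerm χ k c (verticalDilation E r p)) =
      fun p => p.2 ^ k • χ (r * p.2) • (k.factorial : ℝ)⁻¹ • c p.1 := by
    ext p
    simp only [borelTerm, verticalDilation_apply, mul_pow, smul_smul]
    rw [inv_pow, ← mul_assoc, inv_mul_cancel_left₀ (pow_ne_zero k hr)]
  have hcut : (fun p : E × ℝ => χ (r * p.2) • (k.factorial : ℝ)⁻¹ • c p.1) =ᶠ[𝓝 (x, 0)]
      fun p => (k.factorial : ℝ)⁻¹ • c p.1 := by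
    have hlim : Tendsto (fun p : E × ℝ => r * p.2) (𝓝 (x, 0)) (𝓝 0) :=
      Continuous.tendsto' (by fun_prop) _ _ (by simp)
    filter_upwards [hlim.eventually hχ1] with p hp
    simp [hp]
  have hsmooth : ContDiff ℝ ∞ fun p : E × ℝ => χ (r * p.2) • (k.factorial : ℝ)⁻¹ • c p.1 := by
    fun_prop
  rw [hterm, iterate_dirDeriv_snd_pow_smul_zero hsmooth,
    iterate_dirDeriv_snd_of_eventuallyEq_comp_fst (h := fun x => (k.factorial : ℝ)⁻¹ • c x)
      ((hc.differentiable (by simp)).const_smul _) hcut]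
  rcases lt_trichotomy n k with h | rfl | h
  · simp [Nat.descFactorial_of_lt h, h.ne']
  · simp [Nat.descFactorial_self, smul_smul, Nat.factorial_ne_zero]
  · simp [h.ne, Nat.sub_ne_zero_of_lt h]

theorem exists_contDiff_iterate_dirDeriv_snd_eq [CompleteSpace V] {c : ℕ → E → V}
    (hc : ∀ n, ContDiff ℝ ∞ (c n)) (hsupp : ∀ n, HasCompactSupport (c n)) :
    ∃ b : E × ℝ → V, ContDiff ℝ ∞ b ∧ ∀ n x, (dirDeriv (0, 1))^[n] b (x, 0) = c n x := by
  let χ : ContDiffBump (0 : ℝ) := ⟨1, 2, one_pos, one_lt_two⟩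
  have hχ : ContDiff ℝ ∞ χ := χ.contDiff
  have hterm (k : ℕ) : ContDiff ℝ ∞ (borelTerm χ k (c k)) := by
    have := hc k
    unfold borelTerm
    fun_prop
  choose r hr C hC hle using fun k => exists_dilation_iteratedFDeriv_le (hterm k)
    (hasCompactSupport_borelTerm χ.hasCompactSupport k (hsupp k)) k
  let f (k : ℕ) (p : E × ℝ) : V := (r k)⁻¹ ^ k • borelTerm χ k (c k) (verticalDilation E (r k) p)
  have hf (k : ℕ) : ContDiff ℝ ∞ (f k) :=
    ((hterm k).comp (verticalDilation E (r k)).contDiff).const_smul _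
  have hCsum (j : ℕ) : Summable fun k => C k j := by
    refine Summable.of_norm_bounded_eventually_nat summable_geometric_two ?_
    filter_upwards [eventually_gt_atTop j] with k hk
    rw [Real.norm_of_nonneg ((norm_nonneg _).trans (hle k j 0))]
    exact hC k j hk
  refine ⟨fun p => ∑' k, f k p,
    contDiff_tsum (N := ⊤) hf (fun j _ => hCsum j) fun j k p _ => hle k j p, fun n x => ?_⟩
  rw [iterate_dirDeriv_tsum hf hCsum fun j k p => hle k j p]
  have hr0 (k : ℕ) : r k ≠ 0 := (one_pos.trans_le (hr k)).ne'
  simp only [f, iterate_dirDeriv_borelTerm_dilation hχ χ.eventuallyEq_one (hc _) (hr0 _),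
    tsum_ite_eq]

end Borel

section Whitney

variable {E V : Type*} [NormedAddCommGroup E] [NormedSpace ℝ E]
  [NormedAddCommGroup V] [NormedSpace ℝ V]

/-- A sequence of smooth maps with `∂_w Hₙ = 2w Hₙ₊₁`, vanishing at `w = 0`. It is the sequence
`(∂_yⁿ h)(x, w²)` of a map `h` that is flat at `y = 0`. -/
structure IsFlatSqChain (H : ℕ → E × ℝ → V) : Prop where
  contDiff : ∀ n, ContDiff ℝ ∞ (H n)
  dirDeriv_snd : ∀ n p, dirDeriv (0, 1) (H n) p = (2 * p.2) • H (n + 1) p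
  apply_zero : ∀ n x, H n (x, 0) = 0

namespace IsFlatSqChain

variable {H : ℕ → E × ℝ → V}

theorem succ (hH : IsFlatSqChain H) : IsFlatSqChain fun n => H (n + 1) :=
  ⟨fun _ => hH.contDiff _, fun _ => hH.dirDeriv_snd _, fun _ => hH.apply_zero _⟩

theorem add {H' : ℕ → E × ℝ → V} (hH : IsFlatSqChain H) (hH' : IsFlatSqChain H') :
    IsFlatSqChain fun n => H n + H' n where
  contDiff n := (hH.contDiff n).add (hH'.contDiff n)
  dirDeriv_snd n p := by
    rw [dirDeriv_add ((hH.contDiff n).differentiable (by simp))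
      ((hH'.contDiff n).differentiable (by simp)), Pi.add_apply, hH.dirDeriv_snd,
      hH'.dirDeriv_snd, Pi.add_apply, smul_add]
  apply_zero n x := by simp [hH.apply_zero, hH'.apply_zero]

theorem const_smul (hH : IsFlatSqChain H) (r : ℝ) : IsFlatSqChain fun n => r • H n where
  contDiff n := (hH.contDiff n).const_smul r
  dirDeriv_snd n p := by
    rw [dirDeriv_const_smul ((hH.contDiff n).differentiable (by simp)), Pi.smul_apply,
      hH.dirDeriv_snd, Pi.smul_apply, smul_comm]
  apply_zero n x := by simp [hH.apply_zero]

theorem dirDeriv_fst (hH : IsFlatSqChain H) (v : E) :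
    IsFlatSqChain fun n => dirDeriv (v, 0) (H n) where
  contDiff n := contDiff_dirDeriv (hH.contDiff n) _
  dirDeriv_snd n p := by
    have hsmul := (hasFDerivAt_snd (p := p).const_mul 2).smul
      ((hH.contDiff (n + 1)).differentiable (by simp) p).hasFDerivAt
    rw [dirDeriv_comm (hH.contDiff n), funext (hH.dirDeriv_snd n)]
    exact (dirDeriv_of_hasFDerivAt hsmul (v, 0)).trans (by simp [dirDeriv])
  apply_zero n x := by
    have hline := ((hH.contDiff n).differentiable (by simp) (x, 0)).hasFDerivAt.comp x
      (hasFDerivAt_prodMk_left (𝕜 := ℝ) x (0 : ℝ))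
    simp only [Function.comp_def, hH.apply_zero] at hline
    simpa [dirDeriv] using congrArg (· v) (hline.unique (hasFDerivAt_const 0 x))

theorem continuous_comp_sqrt (hH : IsFlatSqChain H) (n : ℕ) :
    Continuous fun p : E × ℝ => H n (p.1, √p.2) := by
  have := (hH.contDiff n).continuous
  fun_prop

theorem hasDerivAt_comp_sqrt (hH : IsFlatSqChain H) (n : ℕ) (x : E) (y : ℝ) :
    HasDerivAt (fun y => H n (x, √y)) (H (n + 1) (x, √y)) y := by
  have hcont (k : ℕ) : ContinuousAt (fun y => H k (x, √y)) 0 :=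
    ((hH.continuous_comp_sqrt k).comp (Continuous.prodMk_right x)).continuousAt
  refine hasDerivAt_of_hasDerivAt_of_ne' (x := 0) (fun y hy => ?_) (hcont n) (hcont (n + 1)) y
  rcases lt_or_gt_of_ne hy with hneg | hpos
  · -- `√y = 0` for `y ≤ 0`, so the map is locally constant there.
    have hlocal : (fun y => H n (x, √y)) =ᶠ[𝓝 y] fun _ => 0 := by
      filter_upwards [eventually_lt_nhds hneg] with z hz
      rw [Real.sqrt_eq_zero_of_nonpos hz.le, hH.apply_zero]
    rw [Real.sqrt_eq_zero_of_nonpos hneg.le, hH.apply_zero]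
    exact (hasDerivAt_const y 0).congr_of_eventuallyEq hlocal
  · have hchain := (hasDerivAt_snd_dirDeriv ((hH.contDiff n).differentiable (by simp)) x
      (√y)).scomp y (Real.hasDerivAt_sqrt hy)
    have hsqrt : 1 / (2 * √y) * (2 * √y) = 1 := by
      have := Real.sqrt_pos.2 hpos
      field_simp
    rwa [hH.dirDeriv_snd, smul_smul, hsqrt, one_smul] at hchain

theorem hasFDerivAt_comp_sqrt (hH : IsFlatSqChain H) (n : ℕ) (p : E × ℝ) :
    HasFDerivAt (fun p : E × ℝ => H n (p.1, √p.2))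
      (((fderiv ℝ (H n) (p.1, √p.2)).comp (ContinuousLinearMap.inl ℝ E ℝ)).coprod
        (ContinuousLinearMap.toSpanSingleton ℝ (H (n + 1) (p.1, √p.2)))) p := by
  have hfst : Continuous fun p : E × ℝ =>
      (fderiv ℝ (H n) (p.1, √p.2)).comp (ContinuousLinearMap.inl ℝ E ℝ) := by
    have := (hH.contDiff n).continuous_fderiv (by simp)
    fun_prop
  have hsnd : Continuous fun p : E × ℝ =>
      ContinuousLinearMap.toSpanSingleton ℝ (H (n + 1) (p.1, √p.2)) :=
    (ContinuousLinearMap.toSpanSingletonCLE (𝕜 := ℝ)).continuous.comp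
      (hH.continuous_comp_sqrt (n + 1))
  exact (hasStrictFDerivAt_uncurry_coprod (f := fun x y => H n (x, √y))
    (f₁ := fun x y => (fderiv ℝ (H n) (x, √y)).comp (ContinuousLinearMap.inl ℝ E ℝ))
    (f₂ := fun x y => ContinuousLinearMap.toSpanSingleton ℝ (H (n + 1) (x, √y)))
    (.of_forall fun q => ((hH.contDiff n).differentiable (by simp) _).hasFDerivAt.comp q.1
      (hasFDerivAt_prodMk_left q.1 (√q.2)))
    (.of_forall fun q => (hH.hasDerivAt_comp_sqrt n q.1 q.2).hasFDerivAt)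
    hfst.continuousAt hsnd.continuousAt).hasFDerivAt

theorem contDiff_comp_sqrt [FiniteDimensional ℝ E] (hH : IsFlatSqChain H) :
    ContDiff ℝ ∞ fun p : E × ℝ => H 0 (p.1, √p.2) := by
  refine contDiff_of_dirDeriv_mem
    (S := {g | ∃ H : ℕ → E × ℝ → V, IsFlatSqChain H ∧ g = fun p => H 0 (p.1, √p.2)})
    ?_ ?_ ⟨H, hH, rfl⟩
  · rintro _ ⟨H, hH, rfl⟩ p
    exact (hH.hasFDerivAt_comp_sqrt 0 p).differentiableAt
  · rintro _ ⟨H, hH, rfl⟩ ⟨v, r⟩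
    refine ⟨_, (hH.dirDeriv_fst v).add (hH.succ.const_smul r), funext fun p => ?_⟩
    exact (dirDeriv_of_hasFDerivAt (hH.hasFDerivAt_comp_sqrt 0 p) (v, r)).trans
      (by simp [dirDeriv])

end IsFlatSqChain

theorem exists_dirDeriv_snd_eq_smul_of_even [CompleteSpace V] [FiniteDimensional ℝ E]
    {e : E × ℝ → V} (he : ContDiff ℝ ∞ e) (heven : ∀ x w, e (x, -w) = e (x, w)) :
    ∃ k : E × ℝ → V, ContDiff ℝ ∞ k ∧ (∀ x w, k (x, -w) = k (x, w)) ∧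
      ∀ p, dirDeriv (0, 1) e p = (2 * p.2) • k p := by
  have hodd (x : E) (w : ℝ) : dirDeriv (0, 1) e (x, -w) = -dirDeriv (0, 1) e (x, w) := by
    have hd := he.differentiable (by simp)
    have hneg := (hasDerivAt_snd_dirDeriv hd x (-w)).scomp w (hasDerivAt_neg w)
    simp only [Function.comp_def, heven] at hneg
    simpa [neg_eq_iff_eq_neg] using hneg.unique (hasDerivAt_snd_dirDeriv hd x w)
  obtain ⟨k, hk, hkeven, hfac⟩ := exists_even_smul_of_odd (contDiff_dirDeriv he (0, 1)) hodd
  refine ⟨fun p => (2⁻¹ : ℝ) • k p, hk.const_smul _, fun x w => by simp only [hkeven], fun p => ?_⟩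
  rw [hfac, smul_smul]
  congr 1
  ring

theorem exists_seq_dirDeriv_snd_eq_smul_of_even [CompleteSpace V] [FiniteDimensional ℝ E]
    {e : E × ℝ → V} (he : ContDiff ℝ ∞ e) (heven : ∀ x w, e (x, -w) = e (x, w)) :
    ∃ k : ℕ → E × ℝ → V, k 0 = e ∧ (∀ n, ContDiff ℝ ∞ (k n)) ∧
      ∀ n p, dirDeriv (0, 1) (k n) p = (2 * p.2) • k (n + 1) p := by
  choose! next hsmooth heven' hnext using fun e : E × ℝ → V =>
    fun he : ContDiff ℝ ∞ e => exists_dirDeriv_snd_eq_smul_of_even he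
  have hiter (n : ℕ) :
      ContDiff ℝ ∞ (next^[n] e) ∧ ∀ x w, next^[n] e (x, -w) = next^[n] e (x, w) := by
    induction n with
    | zero => exact ⟨he, heven⟩
    | succ n ih =>
      rw [Function.iterate_succ_apply']
      exact ⟨hsmooth _ ih.1 ih.2, heven' _ ih.1 ih.2⟩
  refine ⟨fun n => next^[n] e, rfl, fun n => (hiter n).1, fun n => ?_⟩
  simp only [Function.iterate_succ_apply']
  exact hnext _ (hiter n).1 (hiter n).2

theorem exists_contDiff_comp_sq_of_even [CompleteSpace V] [FiniteDimensional ℝ E]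
    {e : E × ℝ → V} (he : ContDiff ℝ ∞ e) (heven : ∀ x w, e (x, -w) = e (x, w))
    {χ : E → ℝ} (hχ : ContDiff ℝ ∞ χ) (hsupp : HasCompactSupport χ) :
    ∃ a : E × ℝ → V, ContDiff ℝ ∞ a ∧ ∀ x w, χ x • e (x, w) = a (x, w ^ 2) := by
  obtain ⟨k, rfl, hk, hsucc⟩ := exists_seq_dirDeriv_snd_eq_smul_of_even he heven
  -- Borel's lemma provides a `b` whose Taylor coefficients along `y = 0` are those forced on the
  -- unknown `a`; the remainder `χ e - b(x, w²)` is then flat and can be composed with `√y`.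
  obtain ⟨b, hb, hTaylor⟩ := exists_contDiff_iterate_dirDeriv_snd_eq
    (c := fun n x => χ x • k n (x, 0))
    (fun n => hχ.smul ((hk n).comp (contDiff_prodMk_left 0))) fun n => hsupp.smul_right
  have hbn (n : ℕ) := contDiff_iterate_dirDeriv hb (0, 1) n
  have hflat : IsFlatSqChain fun n p =>
      χ p.1 • k n p - (dirDeriv (0, 1))^[n] b (p.1, p.2 ^ 2) := by
    refine ⟨fun n => ?_, fun n p => ?_, fun n x => by simp [hTaylor]⟩
    · have := hk n
      have := hbn n
      fun_prop
    · have hχk := ((hχ.differentiable (by simp) p.1).hasFDerivAt.comp p hasFDerivAt_fst).smul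
        ((hk n).differentiable (by simp) p).hasFDerivAt
      have hbsq : Differentiable ℝ fun p : E × ℝ => (dirDeriv (0, 1))^[n] b (p.1, p.2 ^ 2) :=
        ((hbn n).differentiable (by simp)).comp (by fun_prop)
      have hsq := congrFun (dirDeriv_snd_comp_sq ((hbn n).differentiable (by simp))) p
      have hkn : fderiv ℝ (k n) p (0, 1) = _ := hsucc n p
      refine (dirDeriv_of_hasFDerivAt (hχk.sub (hbsq p).hasFDerivAt) (0, 1)).trans ?_
      simp only [dirDeriv, Function.iterate_succ_apply'] at hsq ⊢
      simp [hsq, hkn]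
      module
  refine ⟨fun p => b p + (χ p.1 • k 0 (p.1, √p.2) - b (p.1, √p.2 ^ 2)),
    hb.add hflat.contDiff_comp_sqrt, fun x w => ?_⟩
  have habs : k 0 (x, |w|) = k 0 (x, w) := by
    rcases abs_choice w with h | h <;> simp only [h, heven]
  simp [Real.sqrt_sq_eq_abs, sq_abs, habs]

theorem exists_contDiff_comp_sq_add_smul_comp_sq [CompleteSpace V] [FiniteDimensional ℝ E]
    {g : E × ℝ → V} (hg : ContDiff ℝ ∞ g) {χ : E → ℝ} (hχ : ContDiff ℝ ∞ χ)
    (hsupp : HasCompactSupport χ) :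
    ∃ a b : E × ℝ → V, ContDiff ℝ ∞ a ∧ ContDiff ℝ ∞ b ∧
      ∀ x w, χ x • g (x, w) = a (x, w ^ 2) + w • b (x, w ^ 2) := by
  have hneg : ContDiff ℝ ∞ fun p : E × ℝ => g (p.1, -p.2) := by fun_prop
  obtain ⟨k, hk, hkeven, hodd⟩ := exists_even_smul_of_odd
    (g := fun p => (2⁻¹ : ℝ) • (g p - g (p.1, -p.2))) ((hg.sub hneg).const_smul _)
    fun x w => by simp only [neg_neg]; module
  obtain ⟨a, ha, hae⟩ := exists_contDiff_comp_sq_of_even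
    (e := fun p => (2⁻¹ : ℝ) • (g p + g (p.1, -p.2))) ((hg.add hneg).const_smul _)
    (fun x w => by simp only [neg_neg, add_comm]) hχ hsupp
  obtain ⟨b, hb, hbk⟩ := exists_contDiff_comp_sq_of_even hk hkeven hχ hsupp
  refine ⟨a, b, ha, hb, fun x w => ?_⟩
  rw [← hae, ← hbk, smul_comm w, ← hodd]
  module

theorem exists_eventuallyEq_comp_sq_add_smul_comp_sq [CompleteSpace V] [FiniteDimensional ℝ E]
    {g : E × ℝ → V} (hg : ContDiff ℝ ∞ g) (x₀ : E) :
    ∃ a b : E × ℝ → V, ContDiff ℝ ∞ a ∧ ContDiff ℝ ∞ b ∧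
      ∀ᶠ x in 𝓝 x₀, ∀ w, g (x, w) = a (x, w ^ 2) + w • b (x, w ^ 2) := by
  let χ : ContDiffBump x₀ := default
  obtain ⟨a, b, ha, hb, hab⟩ :=
    exists_contDiff_comp_sq_add_smul_comp_sq hg χ.contDiff χ.hasCompactSupport
  refine ⟨a, b, ha, hb, χ.eventuallyEq_one.mono fun x hx w => ?_⟩
  rw [← hab, hx, Pi.one_apply, one_smul]

end Whitney

section CuspidalForm

variable {E V : Type*} [NormedAddCommGroup E] [NormedSpace ℝ E]
  [NormedAddCommGroup V] [NormedSpace ℝ V]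

theorem exists_eventuallyEq_comp_sq_add_pow_three_smul [CompleteSpace V] [FiniteDimensional ℝ E]
    {g : E × ℝ → V} (hg : ContDiff ℝ ∞ g) {x₀ : E}
    (hcrit : ∀ᶠ x in 𝓝 x₀, dirDeriv (0, 1) g (x, 0) = 0) :
    ∃ a c : E × ℝ → V, ContDiff ℝ ∞ a ∧ ContDiff ℝ ∞ c ∧
      ∀ᶠ x in 𝓝 x₀, ∀ w, g (x, w) = a (x, w ^ 2) + w ^ 3 • c (x, w ^ 2) := by
  obtain ⟨a, b, ha, hb, hab⟩ := exists_eventuallyEq_comp_sq_add_smul_comp_sq hg x₀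
  refine ⟨a, hadamardQuotient b, ha, contDiff_hadamardQuotient hb, ?_⟩
  filter_upwards [hab, hcrit] with x hx hx₀ w
  have hbx : b (x, 0) = 0 := by
    have hline : HasDerivAt (fun w : ℝ => a (x, w ^ 2) + w • b (x, w ^ 2)) (b (x, 0)) 0 := by
      have hsq := hasDerivAt_pow 2 (0 : ℝ)
      have hc {h : E × ℝ → V} (hh : ContDiff ℝ ∞ h) :
          HasDerivAt (fun w : ℝ => h (x, w ^ 2)) 0 0 := by
        simpa [Function.comp_def] using
          (hasDerivAt_snd_dirDeriv (hh.differentiable (by simp)) x (0 ^ 2)).scomp 0 hsq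
      exact ((hc ha).add ((hasDerivAt_id (0 : ℝ)).smul (hc hb))).congr_deriv (by simp)
    rw [← funext hx] at hline
    exact (hline.unique (hasDerivAt_snd_dirDeriv (hg.differentiable (by simp)) x 0)).trans hx₀
  rw [hx, ← add_smul_hadamardQuotient hb x (w ^ 2), hbx, zero_add, smul_smul, ← pow_succ']

theorem iterate_dirDeriv_add {g h : E → V} (hg : ContDiff ℝ ∞ g) (hh : ContDiff ℝ ∞ h) (v : E)
    (n : ℕ) : (dirDeriv v)^[n] (g + h) = (dirDeriv v)^[n] g + (dirDeriv v)^[n] h := by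
  induction n with
  | zero => rfl
  | succ n ih =>
    simp only [Function.iterate_succ_apply', ih]
    exact dirDeriv_add ((contDiff_iterate_dirDeriv hg v n).differentiable (by simp))
      ((contDiff_iterate_dirDeriv hh v n).differentiable (by simp)) v

theorem iterate_succ_dirDeriv_snd_comp_sq_zero {a : E × ℝ → V} (ha : ContDiff ℝ ∞ a) (n : ℕ)
    (x : E) : (dirDeriv (0, 1))^[n + 1] (fun p => a (p.1, p.2 ^ 2)) (x, 0) =
      (n : ℝ) • (dirDeriv (0, 1))^[n - 1]
        (fun p => ((2 : ℝ) • dirDeriv (0, 1) a) (p.1, p.2 ^ 2)) (x, 0) := by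
  have hsq : ContDiff ℝ ∞ fun p : E × ℝ => ((2 : ℝ) • dirDeriv (0, 1) a) (p.1, p.2 ^ 2) :=
    ((contDiff_dirDeriv ha _).const_smul _).comp (by fun_prop)
  have := iterate_dirDeriv_snd_pow_smul_zero hsq n 1 x
  simpa only [pow_one, Nat.descFactorial_one, Pi.smul_apply, smul_smul, mul_comm,
    Function.iterate_succ_apply, dirDeriv_snd_comp_sq (ha.differentiable (by simp))] using this

theorem dirDeriv_fst_comp_sq_add_pow_three_smul {a c : E × ℝ → V} (ha : Differentiable ℝ a)
    (hc : Differentiable ℝ c) (x v : E) :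
    dirDeriv (v, 0) (fun p => a (p.1, p.2 ^ 2) + p.2 ^ 3 • c (p.1, p.2 ^ 2)) (x, 0) =
      dirDeriv (v, 0) a (x, 0) := by
  have hsq : HasFDerivAt (fun p : E × ℝ => (p.1, p.2 ^ 2))
      ((ContinuousLinearMap.fst ℝ E ℝ).prod 0) (x, 0) :=
    hasFDerivAt_fst.prodMk ((hasFDerivAt_snd.pow 2).congr_fderiv (by ext <;> simp))
  have hpow : HasFDerivAt (fun p : E × ℝ => p.2 ^ 3) (0 : E × ℝ →L[ℝ] ℝ) (x, 0) :=
    (hasFDerivAt_snd.pow 3).congr_fderiv (by ext <;> simp)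
  exact (dirDeriv_of_hasFDerivAt (((ha _).hasFDerivAt.comp _ hsq).add
    (hpow.smul ((hc _).hasFDerivAt.comp _ hsq))) (v, 0)).trans (by simp [dirDeriv])

theorem iterate_dirDeriv_snd_comp_sq_add_pow_three_smul {a c : E × ℝ → V}
    (ha : ContDiff ℝ ∞ a) (hc : ContDiff ℝ ∞ c) (n : ℕ) (x : E) :
    (dirDeriv (0, 1))^[n] (fun p => a (p.1, p.2 ^ 2) + p.2 ^ 3 • c (p.1, p.2 ^ 2)) (x, 0) =
      (dirDeriv (0, 1))^[n] (fun p => a (p.1, p.2 ^ 2)) (x, 0) +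
        (n.descFactorial 3 : ℝ) • (dirDeriv (0, 1))^[n - 3]
          (fun p => c (p.1, p.2 ^ 2)) (x, 0) := by
  have hsq : ContDiff ℝ ∞ fun p : E × ℝ => (p.1, p.2 ^ 2) := by fun_prop
  exact (congrFun (iterate_dirDeriv_add (ha.comp hsq)
    ((contDiff_snd.pow 3).smul (hc.comp hsq)) (0, 1) n) (x, 0)).trans
    (congrArg _ (iterate_dirDeriv_snd_pow_smul_zero (hc.comp hsq) n 3 x))

theorem iterate_two_dirDeriv_snd_comp_sq_add_pow_three_smul {a c : E × ℝ → V}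
    (ha : ContDiff ℝ ∞ a) (hc : ContDiff ℝ ∞ c) (x : E) :
    (dirDeriv (0, 1))^[2] (fun p => a (p.1, p.2 ^ 2) + p.2 ^ 3 • c (p.1, p.2 ^ 2)) (x, 0) =
      (2 : ℝ) • dirDeriv (0, 1) a (x, 0) := by
  rw [iterate_dirDeriv_snd_comp_sq_add_pow_three_smul ha hc,
    iterate_succ_dirDeriv_snd_comp_sq_zero ha]
  simp

theorem iterate_three_dirDeriv_snd_comp_sq_add_pow_three_smul {a c : E × ℝ → V}
    (ha : ContDiff ℝ ∞ a) (hc : ContDiff ℝ ∞ c) (x : E) :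
    (dirDeriv (0, 1))^[3] (fun p => a (p.1, p.2 ^ 2) + p.2 ^ 3 • c (p.1, p.2 ^ 2)) (x, 0) =
      (6 : ℝ) • c (x, 0) := by
  have ha' : Differentiable ℝ ((2 : ℝ) • dirDeriv (0, 1) a) :=
    ((contDiff_dirDeriv ha _).const_smul _).differentiable (by simp)
  rw [iterate_dirDeriv_snd_comp_sq_add_pow_three_smul ha hc,
    iterate_succ_dirDeriv_snd_comp_sq_zero ha, Function.iterate_one,
    dirDeriv_snd_comp_sq ha']
  simp [Nat.descFactorial]

end CuspidalForm

section Germ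

variable {E F : Type*} [NormedAddCommGroup E] [NormedSpace ℝ E]
  [NormedAddCommGroup F] [NormedSpace ℝ F]

theorem smoothDiffeoOn_id {U : Set E} (hU : IsOpen U) : SmoothDiffeoOn (id : E → E) U :=
  ⟨hU, by rwa [image_id], contDiffOn_id, id, contDiffOn_id, fun _ _ => rfl⟩

theorem SmoothDiffeoOn.comp_equiv {σ : E → F} {U : Set E} (hσ : SmoothDiffeoOn σ U) (e : E ≃ E)
    (he : ContDiff ℝ ∞ e) (he' : ContDiff ℝ ∞ e.symm) : SmoothDiffeoOn (σ ∘ e) (e ⁻¹' U) := by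
  obtain ⟨hU, himage, hsmooth, σinv, hinv, hleft⟩ := hσ
  have himage_eq : σ ∘ e '' (e ⁻¹' U) = σ '' U := by
    rw [image_comp, image_preimage_eq U e.surjective]
  refine ⟨hU.preimage he.continuous, by rwa [himage_eq],
    hsmooth.comp he.contDiffOn fun x hx => hx, e.symm ∘ σinv, ?_, fun x hx => ?_⟩
  · rw [himage_eq]
    exact he'.comp_contDiffOn hinv
  · simp [hleft (e x) hx]

theorem SmoothDiffeoOn.mono {σ : E → F} {U U' : Set E} (hσ : SmoothDiffeoOn σ U) (hU' : IsOpen U')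
    (hsub : U' ⊆ U) : SmoothDiffeoOn σ U' := by
  obtain ⟨-, himage, hsmooth, σinv, hinv, hleft⟩ := hσ
  refine ⟨hU', ?_, hsmooth.mono hsub, σinv, hinv.mono (image_mono hsub),
    fun x hx => hleft x (hsub hx)⟩
  have himage_eq : σ '' U' = σ '' U ∩ σinv ⁻¹' U' := by
    ext y
    constructor
    · rintro ⟨x, hx, rfl⟩
      exact ⟨mem_image_of_mem σ (hsub hx), by rwa [mem_preimage, hleft x (hsub hx)]⟩
    · rintro ⟨⟨x, hx, rfl⟩, hy⟩
      rw [mem_preimage, hleft x hx] at hy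
      exact mem_image_of_mem σ hy
  rw [himage_eq]
  exact hinv.continuousOn.isOpen_inter_preimage himage hU'

theorem exists_smoothDiffeoOn_leftInverse [CompleteSpace E] {T : E → F} (hT : ContDiff ℝ ∞ T)
    {x₀ : E} {M : E ≃L[ℝ] F} (hM : HasFDerivAt T (M : E →L[ℝ] F) x₀) :
    ∃ (S : Set E) (τ : F → E), IsOpen S ∧ x₀ ∈ S ∧ SmoothDiffeoOn τ (T '' S) ∧
      ∀ x ∈ S, τ (T x) = x := by
  let e := hT.contDiffAt.toOpenPartialHomeomorph T hM (by simp)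
  let S : Set E := e.source ∩ {x | fderiv ℝ T x ∈ range ((↑) : (E ≃L[ℝ] F) → E →L[ℝ] F)}
  have hS : IsOpen S := e.open_source.inter
    (ContinuousLinearEquiv.isOpen.preimage (hT.continuous_fderiv (by simp)))
  have hleft : ∀ x ∈ S, e.symm (T x) = x := fun x hx => e.left_inv hx.1
  have himage : e.symm '' (T '' S) = S := by
    rw [image_image, image_congr hleft, image_id']
  refine ⟨S, e.symm, hS, ⟨hT.contDiffAt.mem_toOpenPartialHomeomorph_source hM (by simp),
    M, hM.fderiv.symm⟩, ⟨e.isOpen_image_of_subset_source hS inter_subset_left, by rwa [himage],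
    ?_, T, hT.contDiffOn, ?_⟩, hleft⟩
  · rintro _ ⟨x, ⟨hx, L, hL⟩, rfl⟩
    have hLx : HasFDerivAt T (L : E →L[ℝ] F) (e.symm (T x)) := by
      rw [hleft x ⟨hx, L, hL⟩, hL]
      exact (hT.differentiable (by simp) x).hasFDerivAt
    exact (e.contDiffAt_symm (e.map_source hx) hLx hT.contDiffAt).contDiffWithinAt
  · rintro _ ⟨x, hx, rfl⟩
    rw [hleft x hx]

theorem GermDiffeomorphic.congr_left {f f' g : E → F} {p q : E} (hf : GermDiffeomorphic f p g q)
    (hff' : f' =ᶠ[𝓝 p] f) : GermDiffeomorphic f' p g q := by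
  obtain ⟨U, V, σ, τ, hσ, hτ, hp, hfp, hσp, hτp, hmaps, hconj⟩ := hf
  obtain ⟨N, hN, hNopen, hpN⟩ := eventually_nhds_iff.1 hff'
  refine ⟨U ∩ N, V, σ, τ, hσ.mono (hσ.1.inter hNopen) inter_subset_left, hτ, ⟨hp, hpN⟩, ?_, hσp,
    ?_, fun x hx => ?_, fun x hx => ?_⟩
  · rwa [hN p hpN]
  · rwa [hN p hpN]
  · rw [hN x hx.2]; exact hmaps x hx.1
  · rw [hN x hx.2]; exact hconj x hx.1

theorem GermDiffeomorphic.comp_equiv {f g : E → F} {p q : E} (e : E ≃ E)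
    (hf : GermDiffeomorphic f (e p) g q) (he : ContDiff ℝ ∞ e) (he' : ContDiff ℝ ∞ e.symm) :
    GermDiffeomorphic (f ∘ e) p g q := by
  obtain ⟨U, V, σ, τ, hσ, hτ, hp, hfp, hσp, hτp, hmaps, hconj⟩ := hf
  exact ⟨e ⁻¹' U, V, σ ∘ e, τ, hσ.comp_equiv e he he', hτ, hp, hfp, hσp, hτp,
    fun x hx => hmaps (e x) hx, fun x hx => hconj (e x) hx⟩

theorem germDiffeomorphic_comp [CompleteSpace F] {g : E → F} (hg : Continuous g) {q : E}
    {T : F → F} (hT : ContDiff ℝ ∞ T) {M : F ≃L[ℝ] F}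
    (hM : HasFDerivAt T (M : F →L[ℝ] F) (g q)) : GermDiffeomorphic (T ∘ g) q g q := by
  obtain ⟨S, τ, hS, hqS, hτ, hleft⟩ := exists_smoothDiffeoOn_leftInverse hT hM
  exact ⟨g ⁻¹' S, T '' S, id, τ, smoothDiffeoOn_id (hS.preimage hg), hτ, hqS,
    mem_image_of_mem T hqS, rfl, hleft _ hqS, fun x hx => mem_image_of_mem T hx,
    fun x hx => hleft _ hx⟩

end Germ

section Recognition

theorem exists_linearEquiv_apply_eq_of_linearIndependent {ι K V : Type*} [Finite ι] [Field K]
    [AddCommGroup V] [Module K V] {v w : ι → V} (hv : LinearIndependent K v)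
    (hw : LinearIndependent K w) : ∃ B : V ≃ₗ[K] V, ∀ i, B (v i) = w i := by
  have : FiniteDimensional K (Submodule.span K (range v)) :=
    FiniteDimensional.span_of_finite K (finite_range v)
  obtain ⟨B, hB⟩ := Submodule.exists_linearEquiv_restrict_eq
    (hv.linearCombinationEquiv.symm ≪≫ₗ hw.linearCombinationEquiv)
  refine ⟨B, fun i => ?_⟩
  have hvi : hv.linearCombinationEquiv (Finsupp.single i 1) = v i := by simp
  rw [← hvi, ← hB]
  simp

/-- The embedded cuspidal edge `(u, w) ↦ (u, w², w³, 0, …, 0)` in `ℝ^m`. For `m < 3` the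
coordinates that do not exist are dropped. -/
def embeddedCuspidalEdge (m : ℕ) (p : ℝ × ℝ) (j : Fin m) : ℝ :=
  if j.val = 0 then p.1 else if j.val = 1 then p.2 ^ 2 else if j.val = 2 then p.2 ^ 3 else 0

theorem continuous_embeddedCuspidalEdge (m : ℕ) : Continuous (embeddedCuspidalEdge m) := by
  refine continuous_pi fun j => ?_
  unfold embeddedCuspidalEdge
  split_ifs <;> fun_prop

theorem embeddedCuspidalEdge_eq_sum {m : ℕ} (hm : 3 ≤ m) (p : ℝ × ℝ) :
    embeddedCuspidalEdge m p = p.1 • Pi.single (Fin.castLE hm 0) 1 +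
      p.2 ^ 2 • Pi.single (Fin.castLE hm 1) 1 + p.2 ^ 3 • Pi.single (Fin.castLE hm 2) 1 := by
  ext j
  by_cases h0 : j.val = 0 <;> by_cases h1 : j.val = 1 <;> by_cases h2 : j.val = 2 <;>
    simp [embeddedCuspidalEdge, Pi.single_apply, Fin.ext_iff, h0, h1, h2]

theorem fderiv_apply_eq_smul_dirDeriv_add {V : Type*} [NormedAddCommGroup V] [NormedSpace ℝ V]
    (a : ℝ × ℝ → V) (p v : ℝ × ℝ) :
    fderiv ℝ a p v = v.1 • dirDeriv (1, 0) a p + v.2 • dirDeriv (0, 1) a p := by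
  have hv : v = v.1 • (1, 0) + v.2 • (0, 1) := by ext <;> simp
  conv_lhs => rw [hv, map_add, map_smul, map_smul]
  rfl

theorem hasFDerivAt_add_sub_fderiv_add_smul_sub {E F V : Type*} [NormedAddCommGroup E]
    [NormedSpace ℝ E] [NormedAddCommGroup F] [NormedSpace ℝ F] [NormedAddCommGroup V]
    [NormedSpace ℝ V] {a c : E → V} (ha : DifferentiableAt ℝ a 0) (hc : DifferentiableAt ℝ c 0)
    (B : F →L[ℝ] V) (P : F →L[ℝ] E) (ζ : F →L[ℝ] ℝ) :
    HasFDerivAt (fun X => B X + (a (P X) - fderiv ℝ a 0 (P X)) + ζ X • (c (P X) - c 0)) B 0 := by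
  have haP : HasFDerivAt (fun X => a (P X)) ((fderiv ℝ a 0).comp P) 0 :=
    HasFDerivAt.comp 0 (by simpa using ha.hasFDerivAt) P.hasFDerivAt
  have hcP : HasFDerivAt (fun X => c (P X)) ((fderiv ℝ c 0).comp P) 0 :=
    HasFDerivAt.comp 0 (by simpa using hc.hasFDerivAt) P.hasFDerivAt
  exact ((B.hasFDerivAt.add (haP.sub ((fderiv ℝ a 0).comp P).hasFDerivAt)).add
    (ζ.hasFDerivAt.smul (hcP.sub_const (c 0)))).congr_fderiv (by ext; simp)

theorem germDiffeomorphic_embeddedCuspidalEdge_of_comp_sq_add_pow_three_smul {m : ℕ}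
    {a c : ℝ × ℝ → Fin m → ℝ} (ha : ContDiff ℝ ∞ a) (hc : ContDiff ℝ ∞ c)
    (hind : LinearIndependent ℝ
      ![dirDeriv (1, 0) a (0, 0), dirDeriv (0, 1) a (0, 0), c (0, 0)]) :
    GermDiffeomorphic (fun p => a (p.1, p.2 ^ 2) + p.2 ^ 3 • c (p.1, p.2 ^ 2)) (0, 0)
      (embeddedCuspidalEdge m) (0, 0) := by
  have hm : 3 ≤ m := by simpa using hind.fintype_card_le_finrank
  let i : Fin 3 → Fin m := Fin.castLE hm
  obtain ⟨B, hB⟩ := exists_linearEquiv_apply_eq_of_linearIndependent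
    ((Pi.basisFun ℝ (Fin m)).linearIndependent.comp i (Fin.castLE_injective hm)) hind
  have hBedge (p : ℝ × ℝ) : B (embeddedCuspidalEdge m p) = p.1 • dirDeriv (1, 0) a (0, 0) +
      p.2 ^ 2 • dirDeriv (0, 1) a (0, 0) + p.2 ^ 3 • c (0, 0) := by
    have hBi (k : Fin 3) := (congrArg B (Pi.basisFun_apply ℝ (Fin m) (i k)).symm).trans (hB k)
    simp only [embeddedCuspidalEdge_eq_sum hm, map_add, map_smul]
    rw [hBi 0, hBi 1, hBi 2]
    rfl
  let x (k : Fin 3) : (Fin m → ℝ) →L[ℝ] ℝ := ContinuousLinearMap.proj (i k)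
  let T : (Fin m → ℝ) → Fin m → ℝ := fun X =>
    B.toContinuousLinearEquiv X + (a (x 0 X, x 1 X) - fderiv ℝ a 0 (x 0 X, x 1 X)) +
      x 2 X • (c (x 0 X, x 1 X) - c 0)
  have hT : ContDiff ℝ ∞ T := by fun_prop
  have hedge : embeddedCuspidalEdge m (0, 0) = 0 := by simp [embeddedCuspidalEdge_eq_sum hm]
  have hM : HasFDerivAt T (B.toContinuousLinearEquiv : (Fin m → ℝ) →L[ℝ] Fin m → ℝ)
      (embeddedCuspidalEdge m (0, 0)) := by
    rw [hedge]
    exact hasFDerivAt_add_sub_fderiv_add_smul_sub (ha.differentiable (by simp) 0)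
      (hc.differentiable (by simp) 0) (B.toContinuousLinearEquiv : _ →L[ℝ] _)
      ((x 0).prod (x 1)) (x 2)
  convert germDiffeomorphic_comp (continuous_embeddedCuspidalEdge m) hT hM using 1
  funext p
  have hx : x 0 (embeddedCuspidalEdge m p) = p.1 ∧ x 1 (embeddedCuspidalEdge m p) = p.2 ^ 2 ∧
      x 2 (embeddedCuspidalEdge m p) = p.2 ^ 3 := by
    simp [x, i, embeddedCuspidalEdge]
  simp only [T, Function.comp_apply, hx, fderiv_apply_eq_smul_dirDeriv_add,
    LinearEquiv.coe_toContinuousLinearEquiv', hBedge, Prod.mk_zero_zero]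
  module

theorem linearIndependent_triple_smul_iff {K V : Type*} [Field K] [AddCommGroup V] [Module K V]
    {u v w : V} {r s : K} (hr : r ≠ 0) (hs : s ≠ 0) :
    LinearIndependent K ![u, r • v, s • w] ↔ LinearIndependent K ![u, v, w] := by
  rw [← LinearIndependent.units_smul_iff ![u, v, w] ![1, Units.mk0 r hr, Units.mk0 s hs]]
  congr! 1
  ext k
  fin_cases k <;> simp

theorem germDiffeomorphic_embeddedCuspidalEdge {m : ℕ} {g : ℝ × ℝ → Fin m → ℝ}
    (hg : ContDiff ℝ ∞ g) (hcrit : ∀ᶠ u in 𝓝 0, dirDeriv (0, 1) g (u, 0) = 0)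
    (hind : LinearIndependent ℝ ![dirDeriv (1, 0) g (0, 0), (dirDeriv (0, 1))^[2] g (0, 0),
      (dirDeriv (0, 1))^[3] g (0, 0)]) :
    GermDiffeomorphic g (0, 0) (embeddedCuspidalEdge m) (0, 0) := by
  obtain ⟨a, c, ha, hc, hform⟩ := exists_eventuallyEq_comp_sq_add_pow_three_smul hg hcrit
  have hfst : Tendsto Prod.fst (𝓝 ((0 : ℝ), (0 : ℝ))) (𝓝 0) := continuousAt_fst
  have hgerm : g =ᶠ[𝓝 (0, 0)] fun p => a (p.1, p.2 ^ 2) + p.2 ^ 3 • c (p.1, p.2 ^ 2) :=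
    (hfst.eventually hform).mono fun p hp => hp p.2
  refine (germDiffeomorphic_embeddedCuspidalEdge_of_comp_sq_add_pow_three_smul ha hc
    ?_).congr_left hgerm
  rw [(dirDeriv_eventuallyEq hgerm _).eq_of_nhds,
    (iterate_dirDeriv_eventuallyEq hgerm _ 2).eq_of_nhds,
    (iterate_dirDeriv_eventuallyEq hgerm _ 3).eq_of_nhds,
    dirDeriv_fst_comp_sq_add_pow_three_smul (ha.differentiable (by simp))
      (hc.differentiable (by simp)),
    iterate_two_dirDeriv_snd_comp_sq_add_pow_three_smul ha hc,
    iterate_three_dirDeriv_snd_comp_sq_add_pow_three_smul ha hc,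
    linearIndependent_triple_smul_iff two_ne_zero (by norm_num)] at hind
  exact hind

end Recognition

section CovariantDerivative

variable {m : ℕ} {Γ : (Fin m → ℝ) → Fin m → Fin m → Fin m → ℝ}

/-- The bilinear form `(v, w) ↦ (Σ_{μ,ν} Γ^λ_{μν}(x) v^μ w^ν)_λ` that the Christoffel symbols
define at `x`: the zeroth order term of the covariant derivative and of the geodesic equation. -/
def christoffelForm (Γ : (Fin m → ℝ) → Fin m → Fin m → Fin m → ℝ) (x v w : Fin m → ℝ) :
    Fin m → ℝ :=
  fun l => ∑ μ, ∑ ν, Γ x l μ ν * v μ * w ν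

theorem christoffelForm_comm {x : Fin m → ℝ} (hx : ∀ l μ ν, Γ x l μ ν = Γ x l ν μ)
    (v w : Fin m → ℝ) : christoffelForm Γ x v w = christoffelForm Γ x w v := by
  funext l
  unfold christoffelForm
  rw [Finset.sum_comm]
  exact Finset.sum_congr rfl fun μ _ => Finset.sum_congr rfl fun ν _ => by rw [hx]; ring

theorem christoffelForm_neg_right (x v w : Fin m → ℝ) :
    christoffelForm Γ x v (-w) = -christoffelForm Γ x v w := by
  funext l
  simp [christoffelForm]

theorem hasDerivAt_christoffelForm {g a b : ℝ → Fin m → ℝ} {a' b' : Fin m → ℝ} {s : ℝ}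
    (hΓ : ∀ l μ ν, DifferentiableAt ℝ (fun x => Γ x l μ ν) (g s)) (hg : HasDerivAt g 0 s)
    (ha : HasDerivAt a a' s) (hb : HasDerivAt b b' s) :
    HasDerivAt (fun r => christoffelForm Γ (g r) (a r) (b r))
      (christoffelForm Γ (g s) a' (b s) + christoffelForm Γ (g s) (a s) b') s := by
  refine hasDerivAt_pi.2 fun l => ?_
  have hΓg (μ ν : Fin m) : HasDerivAt (fun r => Γ (g r) l μ ν) 0 s :=
    ((hΓ l μ ν).hasFDerivAt.comp_hasDerivAt s hg).congr_deriv (map_zero _)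
  refine (HasDerivAt.fun_sum fun μ _ => HasDerivAt.fun_sum fun ν _ =>
    ((hΓg μ ν).fun_mul (hasDerivAt_pi.1 ha μ)).fun_mul (hasDerivAt_pi.1 hb ν)).congr_deriv ?_
  simp [christoffelForm, Finset.sum_add_distrib]

theorem covDeriv_succ_eq_deriv_add {γ : ℝ → Fin m → ℝ} {k : ℕ} {t : ℝ}
    (hγ : DifferentiableAt ℝ (covDeriv Γ γ k) t) :
    covDeriv Γ γ (k + 1) t = deriv (covDeriv Γ γ k) t +
      christoffelForm Γ (γ t) (deriv γ t) (covDeriv Γ γ k t) := by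
  rw [deriv_pi (differentiableAt_pi.1 hγ)]
  rfl

end CovariantDerivative

section TangentSurface

variable {m : ℕ} {Γ : (Fin m → ℝ) → Fin m → Fin m → Fin m → ℝ}

local notation "∂ₜ" => dirDeriv (1, 0)
local notation "∂ₛ" => dirDeriv (0, 1)
local notation "∂₋" => dirDeriv ((0, 1) - (1, 0))

/-- The germ of `f` at `(t₀, 0)` is that of the `∇`-tangent surface of `γ`: the curves `f(t, ·)`
are geodesics with initial point `γ(t)` and initial velocity `γ'(t)`. Only germs matter, so `f` is
taken to be smooth on the whole plane. -/
structure IsTangentSurfaceAt (Γ : (Fin m → ℝ) → Fin m → Fin m → Fin m → ℝ)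
    (γ : ℝ → Fin m → ℝ) (f : ℝ × ℝ → Fin m → ℝ) (t₀ : ℝ) : Prop where
  smooth : ContDiff ℝ ∞ f
  init_pos : (fun t => f (t, 0)) =ᶠ[𝓝 t₀] γ
  init_vel : (fun t => ∂ₛ f (t, 0)) =ᶠ[𝓝 t₀] deriv γ
  geodesic : ∂ₛ^[2] f =ᶠ[𝓝 (t₀, 0)] fun p => -christoffelForm Γ (f p) (∂ₛ f p) (∂ₛ f p)

namespace IsTangentSurfaceAt

variable {γ : ℝ → Fin m → ℝ} {f : ℝ × ℝ → Fin m → ℝ} {t₀ : ℝ}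

theorem dirDeriv_sub_eventuallyEq_zero (hf : IsTangentSurfaceAt Γ γ f t₀) :
    (fun t => ∂₋ f (t, 0)) =ᶠ[𝓝 t₀] 0 := by
  filter_upwards [hf.init_vel, dirDeriv_fst_eventuallyEq_deriv
    (hf.smooth.differentiable (by simp)) hf.init_pos] with t hs ht
  rw [dirDeriv_sub_direction, Pi.sub_apply, hs, ht, sub_self, Pi.zero_apply]

theorem iterate_dirDeriv_fst_dirDeriv_sub_eventuallyEq_zero (hf : IsTangentSurfaceAt Γ γ f t₀)
    (n : ℕ) : (fun t => ∂ₜ^[n] (∂₋ f) (t, 0)) =ᶠ[𝓝 t₀] 0 := by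
  induction n with
  | zero => exact hf.dirDeriv_sub_eventuallyEq_zero
  | succ n ih =>
    have hsmooth : ContDiff ℝ ∞ (∂ₜ^[n] (∂₋ f)) :=
      contDiff_iterate_dirDeriv (contDiff_dirDeriv hf.smooth _) _ n
    rw [Function.iterate_succ', ← deriv_zero (𝕜 := ℝ)]
    exact dirDeriv_fst_eventuallyEq_deriv (hsmooth.differentiable (by simp)) ih

theorem dirDeriv_sub_dirDeriv_snd_eventuallyEq (hf : IsTangentSurfaceAt Γ γ f t₀) :
    (fun t => ∂₋ (∂ₛ f) (t, 0)) =ᶠ[𝓝 t₀] -covDeriv Γ γ 1 := by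
  have hd : Differentiable ℝ (∂ₛ f) := (contDiff_dirDeriv hf.smooth _).differentiable (by simp)
  have haxis : Tendsto (fun t : ℝ => (t, (0 : ℝ))) (𝓝 t₀) (𝓝 (t₀, 0)) :=
    (Continuous.prodMk_left 0).tendsto t₀
  filter_upwards [hf.init_pos, hf.init_vel, hf.init_vel.eventuallyEq_nhds,
    dirDeriv_fst_eventuallyEq_deriv hd hf.init_vel, haxis.eventually hf.geodesic]
    with t hpos hvel hvel_nhds hacc hgeo
  have hdiff : DifferentiableAt ℝ (covDeriv Γ γ 0) t :=
    (hasDerivAt_fst_dirDeriv hd t 0).differentiableAt.congr_of_eventuallyEq hvel_nhds.symm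
  have hss : ∂ₛ (∂ₛ f) (t, 0) = -christoffelForm Γ (γ t) (deriv γ t) (deriv γ t) := by
    rw [← hpos, ← hvel]; exact hgeo
  rw [dirDeriv_sub_direction, Pi.sub_apply, hss, hacc, Pi.neg_apply,
    covDeriv_succ_eq_deriv_add hdiff]
  simp only [covDeriv]
  abel

theorem dirDeriv_sub_iterate_two_dirDeriv_snd (hf : IsTangentSurfaceAt Γ γ f t₀)
    (hΓ : ∀ l μ ν, DifferentiableAt ℝ (fun x => Γ x l μ ν) (γ t₀))
    (hsymm : ∀ l μ ν, Γ (γ t₀) l μ ν = Γ (γ t₀) l ν μ) :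
    ∂₋ (∂ₛ^[2] f) (t₀, 0) =
      (2 : ℝ) • christoffelForm Γ (γ t₀) (deriv γ t₀) (covDeriv Γ γ 1 t₀) := by
  let v : ℝ × ℝ := (0, 1) - (1, 0)
  have hline {g : ℝ × ℝ → Fin m → ℝ} (hg : ContDiff ℝ ∞ g) :
      HasDerivAt (fun r : ℝ => g ((t₀, 0) + r • v)) (∂₋ g (t₀, 0)) 0 :=
    (hg.differentiable (by simp) _).hasFDerivAt.hasLineDerivAt v
  have htendsto : Tendsto (fun r : ℝ => (t₀, 0) + r • v) (𝓝 0) (𝓝 (t₀, 0)) := by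
    have : Continuous fun r : ℝ => (t₀, 0) + r • v := by fun_prop
    simpa using this.tendsto 0
  have hs := contDiff_dirDeriv hf.smooth ((0, 1) : ℝ × ℝ)
  have hstart : (t₀, (0 : ℝ)) + (0 : ℝ) • v = (t₀, 0) := by simp
  have hpos : f (t₀, 0) = γ t₀ := hf.init_pos.eq_of_nhds
  have hvel : ∂ₛ f (t₀, 0) = deriv γ t₀ := hf.init_vel.eq_of_nhds
  have hcrit : ∂₋ f (t₀, 0) = 0 := hf.dirDeriv_sub_eventuallyEq_zero.eq_of_nhds
  have hacc : ∂₋ (∂ₛ f) (t₀, 0) = -covDeriv Γ γ 1 t₀ :=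
    hf.dirDeriv_sub_dirDeriv_snd_eventuallyEq.eq_of_nhds
  have hform := (hasDerivAt_christoffelForm (g := fun r : ℝ => f ((t₀, 0) + r • v))
    (by simpa only [hstart, hpos] using hΓ) (hcrit ▸ hline hf.smooth) (hline hs) (hline hs)).neg
  have hgeo := (hline (contDiff_iterate_dirDeriv hf.smooth (0, 1) 2)).unique
    (hform.congr_of_eventuallyEq (htendsto.eventually hf.geodesic))
  rw [hgeo, hstart, hpos, hvel, hacc, christoffelForm_comm hsymm (-covDeriv Γ γ 1 t₀),
    christoffelForm_neg_right]
  module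

theorem iterate_two_dirDeriv_sub_eq (hf : IsTangentSurfaceAt Γ γ f t₀) :
    ∂₋^[2] f (t₀, 0) = -covDeriv Γ γ 1 t₀ := by
  rw [iterate_two_dirDeriv_sub hf.smooth, Pi.sub_apply]
  exact (congrArg₂ _ hf.dirDeriv_sub_dirDeriv_snd_eventuallyEq.eq_of_nhds
    (hf.iterate_dirDeriv_fst_dirDeriv_sub_eventuallyEq_zero 1).eq_of_nhds).trans (sub_zero _)

theorem iterate_three_dirDeriv_sub_eq (hf : IsTangentSurfaceAt Γ γ f t₀)
    (hΓ : ∀ l μ ν, DifferentiableAt ℝ (fun x => Γ x l μ ν) (γ t₀))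
    (hsymm : ∀ l μ ν, Γ (γ t₀) l μ ν = Γ (γ t₀) l ν μ) :
    ∂₋^[3] f (t₀, 0) = (2 : ℝ) • covDeriv Γ γ 2 t₀ := by
  have hd : Differentiable ℝ (∂₋ (∂ₛ f)) :=
    (contDiff_dirDeriv (contDiff_dirDeriv hf.smooth _) _).differentiable (by simp)
  have hcov := hf.dirDeriv_sub_dirDeriv_snd_eventuallyEq
  have hdiff : DifferentiableAt ℝ (covDeriv Γ γ 1) t₀ := by
    rw [← neg_neg (covDeriv Γ γ 1)]
    exact ((hasDerivAt_fst_dirDeriv hd t₀ 0).differentiableAt.congr_of_eventuallyEq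
      hcov.symm).neg
  have hderiv : ∂ₜ (∂₋ (∂ₛ f)) (t₀, 0) = -deriv (covDeriv Γ γ 1) t₀ :=
    (dirDeriv_fst_eventuallyEq_deriv hd hcov).eq_of_nhds.trans deriv.neg
  have hzero : ∂ₜ^[2] (∂₋ f) (t₀, 0) = 0 :=
    (hf.iterate_dirDeriv_fst_dirDeriv_sub_eventuallyEq_zero 2).eq_of_nhds
  rw [iterate_three_dirDeriv_sub hf.smooth, Pi.add_apply, Pi.sub_apply, Pi.smul_apply, hzero,
    hderiv, hf.dirDeriv_sub_iterate_two_dirDeriv_snd hΓ hsymm, covDeriv_succ_eq_deriv_add hdiff]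
  module

end IsTangentSurfaceAt

end TangentSurface

section Shear

/-- The change of parameters `(t, s) ↦ (t - t₀ + s, s)`. Its inverse straightens the direction
`∂ₛ - ∂ₜ` of the kernel of a tangent surface along the axis `s = 0`. -/
def shearEquiv (t₀ : ℝ) : ℝ × ℝ ≃ ℝ × ℝ where
  toFun p := (p.1 - t₀ + p.2, p.2)
  invFun q := (t₀ + q.1 - q.2, q.2)
  left_inv p := by ext <;> simp; ring
  right_inv q := by ext <;> simp; ring

theorem contDiff_shearEquiv (t₀ : ℝ) : ContDiff ℝ ∞ (shearEquiv t₀) := by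
  change ContDiff ℝ ∞ fun p : ℝ × ℝ => (p.1 - t₀ + p.2, p.2)
  fun_prop

theorem contDiff_shearEquiv_symm (t₀ : ℝ) : ContDiff ℝ ∞ (shearEquiv t₀).symm := by
  change ContDiff ℝ ∞ fun q : ℝ × ℝ => (t₀ + q.1 - q.2, q.2)
  fun_prop

theorem iterate_dirDeriv_comp_shearEquiv_symm {V : Type*} [NormedAddCommGroup V]
    [NormedSpace ℝ V] {g : ℝ × ℝ → V} (hg : ContDiff ℝ ∞ g) (t₀ : ℝ) (v : ℝ × ℝ) (n : ℕ) :
    (dirDeriv v)^[n] (g ∘ (shearEquiv t₀).symm) =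
      (dirDeriv (v - v.2 • (1, 0)))^[n] g ∘ (shearEquiv t₀).symm := by
  let L : ℝ × ℝ →L[ℝ] ℝ × ℝ := .id ℝ _ - (ContinuousLinearMap.snd ℝ ℝ ℝ).smulRight (1, 0)
  have hL (q : ℝ × ℝ) : (shearEquiv t₀).symm q = (t₀, 0) + L q := by
    ext <;> simp [L, shearEquiv, add_sub_assoc]
  simp only [Function.comp_def, hL]
  exact iterate_dirDeriv_comp_affine hg (t₀, 0) L v n

theorem IsTangentSurfaceAt.germDiffeomorphic {m : ℕ}
    {Γ : (Fin m → ℝ) → Fin m → Fin m → Fin m → ℝ} {γ : ℝ → Fin m → ℝ}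
    {f : ℝ × ℝ → Fin m → ℝ} {t₀ : ℝ}
    (hf : IsTangentSurfaceAt Γ γ f t₀)
    (hΓ : ∀ l μ ν, DifferentiableAt ℝ (fun x => Γ x l μ ν) (γ t₀))
    (hsymm : ∀ l μ ν, Γ (γ t₀) l μ ν = Γ (γ t₀) l ν μ)
    (hind : LinearIndependent ℝ ![covDeriv Γ γ 0 t₀, covDeriv Γ γ 1 t₀, covDeriv Γ γ 2 t₀]) :
    GermDiffeomorphic f (t₀, 0) (embeddedCuspidalEdge m) (0, 0) := by
  let g := f ∘ (shearEquiv t₀).symm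
  have hsnd (n : ℕ) (u : ℝ) : (dirDeriv (0, 1))^[n] g (u, 0) =
      (dirDeriv ((0, 1) - (1, 0)))^[n] f (t₀ + u, 0) := by
    rw [iterate_dirDeriv_comp_shearEquiv_symm hf.smooth, one_smul]
    simp [shearEquiv]
  have hfst : dirDeriv (1, 0) g (0, 0) = deriv γ t₀ := by
    have := congrFun (iterate_dirDeriv_comp_shearEquiv_symm hf.smooth t₀ (1, 0) 1) (0, 0)
    rw [← (dirDeriv_fst_eventuallyEq_deriv (hf.smooth.differentiable (by simp))
      hf.init_pos).eq_of_nhds]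
    simpa [g, shearEquiv] using this
  have hshift : Tendsto (fun u : ℝ => t₀ + u) (𝓝 0) (𝓝 t₀) := by
    simpa using (continuous_const_add t₀).tendsto 0
  have hcrit : ∀ᶠ u in 𝓝 0, dirDeriv (0, 1) g (u, 0) = 0 :=
    (hshift.eventually hf.dirDeriv_sub_eventuallyEq_zero).mono fun u hu => (hsnd 1 u).trans hu
  have hg : GermDiffeomorphic g (0, 0) (embeddedCuspidalEdge m) (0, 0) := by
    refine germDiffeomorphic_embeddedCuspidalEdge
      (hf.smooth.comp (contDiff_shearEquiv_symm t₀)) hcrit ?_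
    rw [hfst, hsnd, hsnd, add_zero, hf.iterate_two_dirDeriv_sub_eq,
      hf.iterate_three_dirDeriv_sub_eq hΓ hsymm, ← neg_one_smul ℝ (covDeriv Γ γ 1 t₀)]
    exact (linearIndependent_triple_smul_iff (by norm_num) two_ne_zero).2 hind
  have hbase : shearEquiv t₀ (t₀, 0) = (0, 0) := by simp [shearEquiv]
  have hgf : g ∘ shearEquiv t₀ = f := by ext; simp [g]
  rw [← hgf]
  exact .comp_equiv (shearEquiv t₀) (hbase ▸ hg) (contDiff_shearEquiv t₀)
    (contDiff_shearEquiv_symm t₀)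

end Shear

section GeodesicFlow

theorem exists_contDiff_eventuallyEq {E V : Type*} [NormedAddCommGroup E] [NormedSpace ℝ E]
    [HasContDiffBump E] [NormedAddCommGroup V] [NormedSpace ℝ V] {F : E → V} {O : Set E}
    (hO : IsOpen O) {n : ℕ∞} (hF : ContDiffOn ℝ n F O) {p : E} (hp : p ∈ O) :
    ∃ f : E → V, ContDiff ℝ n f ∧ f =ᶠ[𝓝 p] F := by
  obtain ⟨r, hr, hrO⟩ := Metric.nhds_basis_closedBall.mem_iff.1 (hO.mem_nhds hp)
  let χ : ContDiffBump p := ⟨r / 2, r, half_pos hr, half_lt_self hr⟩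
  refine ⟨fun x => χ x • F x, contDiff_iff_contDiffAt.2 fun x => ?_, ?_⟩
  · by_cases hx : x ∈ tsupport χ
    · exact χ.contDiffAt.smul (hF.contDiffAt (hO.mem_nhds (hrO (χ.tsupport_eq ▸ hx))))
    · refine contDiffAt_const (c := 0) |>.congr_of_eventuallyEq ?_
      filter_upwards [notMem_tsupport_iff_eventuallyEq.1 hx] with y hy
      simp [hy]
  · filter_upwards [χ.eventuallyEq_one] with x hx
    simp [hx]

variable {m : ℕ} {Γ : (Fin m → ℝ) → Fin m → Fin m → Fin m → ℝ}

theorem dirDeriv_snd_apply_eventuallyEq_deriv {f : ℝ × ℝ → Fin m → ℝ} (hf : Differentiable ℝ f)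
    {c : ℝ → Fin m → ℝ} {t s : ℝ} (hfc : (fun r => f (t, r)) =ᶠ[𝓝 s] c) (l : Fin m) :
    (fun r => dirDeriv (0, 1) f (t, r) l) =ᶠ[𝓝 s] deriv fun r => c r l := by
  have hcl : (fun r => f (t, r) l) =ᶠ[𝓝 s] fun r => c r l := hfc.mono fun r hr => congrFun hr l
  filter_upwards [hcl.deriv] with r hr
  rw [← hr]
  exact (hasDerivAt_pi.1 (hasDerivAt_snd_dirDeriv hf t r) l).deriv.symm

variable {Ω : Set (Fin m → ℝ)} {W : Set ((Fin m → ℝ) × (Fin m → ℝ) × ℝ)}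
  {φ : (Fin m → ℝ) × (Fin m → ℝ) × ℝ → Fin m → ℝ}

theorem IsGeodesicFlow.iterate_two_dirDeriv_snd_eq (hφ : IsGeodesicFlow Γ Ω W φ)
    {f : ℝ × ℝ → Fin m → ℝ} (hf : ContDiff ℝ ∞ f) {x v : Fin m → ℝ} {t s : ℝ}
    (hW : (x, v, s) ∈ W) (hfφ : (fun r => f (t, r)) =ᶠ[𝓝 s] fun r => φ (x, v, r)) :
    (dirDeriv (0, 1))^[2] f (t, s) =
      -christoffelForm Γ (f (t, s)) (dirDeriv (0, 1) f (t, s)) (dirDeriv (0, 1) f (t, s)) := by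
  have hd : Differentiable ℝ (dirDeriv ((0, 1) : ℝ × ℝ) f) :=
    (contDiff_dirDeriv hf _).differentiable (by simp)
  have hvel := dirDeriv_snd_apply_eventuallyEq_deriv (hf.differentiable (by simp)) hfφ
  funext l
  have hacc : (dirDeriv (0, 1))^[2] f (t, s) l = deriv (deriv fun r => φ (x, v, r) l) s := by
    rw [← (hvel l).deriv_eq]
    exact (hasDerivAt_pi.1 (hasDerivAt_snd_dirDeriv hd t s) l).deriv.symm
  rw [hacc, eq_neg_of_add_eq_zero_left (hφ.geodesic _ hW l)]
  simp only [christoffelForm, Pi.neg_apply, (hvel _).eq_of_nhds, ← hfφ.eq_of_nhds]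

theorem IsGeodesicFlow.exists_isTangentSurfaceAt (hφ : IsGeodesicFlow Γ Ω W φ)
    {I : Set ℝ} (hI : IsOpen I) {γ : ℝ → Fin m → ℝ} (hγ : ContDiffOn ℝ ∞ γ I)
    (hγΩ : ∀ t ∈ I, γ t ∈ Ω) {t₀ : ℝ} (ht₀ : t₀ ∈ I) :
    ∃ f, IsTangentSurfaceAt Γ γ f t₀ ∧
      (fun p => φ (γ p.1, deriv γ p.1, p.2)) =ᶠ[𝓝 (t₀, 0)] f := by
  let ψ (p : ℝ × ℝ) := (γ p.1, deriv γ p.1, p.2)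
  have hψ : ContDiffOn ℝ ∞ ψ (Prod.fst ⁻¹' I) :=
    (hγ.comp contDiffOn_fst (mapsTo_preimage _ _)).prodMk
      (((hγ.deriv_of_isOpen hI (by simp)).comp contDiffOn_fst (mapsTo_preimage _ _)).prodMk
        contDiffOn_snd)
  have hO : IsOpen (Prod.fst ⁻¹' I ∩ ψ ⁻¹' W) :=
    hψ.continuousOn.isOpen_inter_preimage (hI.preimage continuous_fst) hφ.isOpen_W
  have hO₀ : (t₀, (0 : ℝ)) ∈ Prod.fst ⁻¹' I ∩ ψ ⁻¹' W :=
    ⟨ht₀, hφ.mem_zero _ (hγΩ t₀ ht₀) _⟩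
  obtain ⟨f, hf, hfφ⟩ := exists_contDiff_eventuallyEq hO
    (hφ.smooth.comp (hψ.mono inter_subset_left) fun p hp => hp.2) hO₀
  have hline {t s : ℝ} (h : f =ᶠ[𝓝 (t, s)] φ ∘ ψ) :
      (fun r => f (t, r)) =ᶠ[𝓝 s] fun r => φ (γ t, deriv γ t, r) :=
    (Continuous.prodMk_right t).continuousAt.eventually h
  have haxis : Tendsto (fun t : ℝ => (t, (0 : ℝ))) (𝓝 t₀) (𝓝 (t₀, 0)) :=
    (Continuous.prodMk_left 0).tendsto t₀
  refine ⟨f, ⟨hf, ?_, ?_, ?_⟩, hfφ.symm⟩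
  · filter_upwards [haxis.eventually hfφ, hI.mem_nhds ht₀] with t ht htI
    exact ht.trans (hφ.init_pos _ (hγΩ t htI) _)
  · filter_upwards [haxis.eventually hfφ.eventuallyEq_nhds, hI.mem_nhds ht₀] with t ht htI
    rw [← (hasDerivAt_snd_dirDeriv (hf.differentiable (by simp)) t 0).deriv, (hline ht).deriv_eq]
    exact hφ.init_vel _ (hγΩ t htI) _
  · filter_upwards [hfφ.eventuallyEq_nhds, hO.mem_nhds hO₀] with p hp hpO
    exact hφ.iterate_two_dirDeriv_snd_eq hf hpO.2 (hline hp)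

end GeodesicFlow

theorem tangent_surface_embedded_cuspidal_edge_general (m : ℕ)
    (Γ : (Fin m → ℝ) → Fin m → Fin m → Fin m → ℝ) (Ω : Set (Fin m → ℝ))
    (W : Set ((Fin m → ℝ) × (Fin m → ℝ) × ℝ))
    (φ : (Fin m → ℝ) × (Fin m → ℝ) × ℝ → Fin m → ℝ) (hφ : IsGeodesicFlow Γ Ω W φ)
    (I : Set ℝ) (hI : IsOpen I)
    (γ : ℝ → Fin m → ℝ) (hγ : ContDiffOn ℝ ∞ γ I) (hγΩ : ∀ t ∈ I, γ t ∈ Ω)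
    (t₀ : ℝ) (ht₀ : t₀ ∈ I)
    (hΓ : ∀ l μ ν, DifferentiableAt ℝ (fun x => Γ x l μ ν) (γ t₀))
    (hsymm : ∀ l μ ν, Γ (γ t₀) l μ ν = Γ (γ t₀) l ν μ)
    (hind : LinearIndependent ℝ ![covDeriv Γ γ 0 t₀, covDeriv Γ γ 1 t₀, covDeriv Γ γ 2 t₀]) :
    GermDiffeomorphic (fun p : ℝ × ℝ => φ (γ p.1, deriv γ p.1, p.2)) (t₀, 0)
      (embeddedCuspidalEdge m) (0, 0) := by
  obtain ⟨f, hf, hfφ⟩ := hφ.exists_isTangentSurfaceAt hI hγ hγΩ ht₀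
  exact (hf.germDiffeomorphic hΓ hsymm hind).congr_left hfφ

/-- For `m ≥ 4`, a torsion-free connection on an open set `Ω ⊆ ℝ^m`, a
geodesic flow `φ`, and a `C^∞` curve `γ : I → Ω`, if `∇γ(t₀), ∇²γ(t₀), ∇³γ(t₀)` are
linearly independent then the germ at `(t₀, 0)` of the `∇`-tangent surface
`f(t,s) = φ(γ(t), γ'(t), s)` is diffeomorphic to the embedded cuspidal edge
`(u,w) ↦ (u, w², w³, 0, …, 0) : ℝ² → ℝ^m`. -/
theorem tangent_surface_embedded_cuspidal_edge (m : ℕ) (hm : 4 ≤ m)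
    (Γ : (Fin m → ℝ) → Fin m → Fin m → Fin m → ℝ)
    (Ω : Set (Fin m → ℝ)) (hΩ : IsOpen Ω)
    (hΓ : ∀ l μ ν, ContDiffOn ℝ (⊤ : ℕ∞) (fun x => Γ x l μ ν) Ω)
    (hTF : ∀ x l μ ν, Γ x l μ ν = Γ x l ν μ)
    (W : Set ((Fin m → ℝ) × (Fin m → ℝ) × ℝ))
    (φ : (Fin m → ℝ) × (Fin m → ℝ) × ℝ → Fin m → ℝ)
    (hφ : IsGeodesicFlow Γ Ω W φ)
    (I : Set ℝ) (hI : IsOpen I) (hI' : I.OrdConnected)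
    (γ : ℝ → Fin m → ℝ) (hγ : ContDiffOn ℝ (⊤ : ℕ∞) γ I) (hγΩ : ∀ t ∈ I, γ t ∈ Ω)
    (t₀ : ℝ) (ht₀ : t₀ ∈ I)
    (hind : LinearIndependent ℝ
      ![covDeriv Γ γ 0 t₀, covDeriv Γ γ 1 t₀, covDeriv Γ γ 2 t₀]) :
    GermDiffeomorphic
      (fun p : ℝ × ℝ => φ (γ p.1, deriv γ p.1, p.2)) (t₀, (0 : ℝ))
      (fun p : ℝ × ℝ => fun j : Fin m =>
        if j.val = 0 then p.1
        else if j.val = 1 then p.2 ^ 2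
        else if j.val = 2 then p.2 ^ 3
        else 0)
      ((0 : ℝ), (0 : ℝ)) :=
  tangent_surface_embedded_cuspidal_edge_general m Γ Ω W φ hφ I hI γ hγ hγΩ t₀ ht₀
    (fun l μ ν => ((hΓ l μ ν).contDiffAt (hΩ.mem_nhds (hγΩ t₀ ht₀))).differentiableAt (by simp))
    (hTF (γ t₀)) hind
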